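/- arXiv:1410.4887 — 2 statements merged into one kernel-verified Lean document; each statement's English description precedes it below -/
import Mathlib

section
/- Let (X,μ,S,T) be an ergodic measure preserving system with commuting transformations S and T, and let f0, f1, f2, f3 ∈ L∞(μ). Then the averages (1/N⁴) Σ_{i,j,k,p=0}^{N-1} f0(S^i T^j x) · f1(S^{i+k} T^j x) · f2(S^i T^{j+p} x) · f3(S^{i+k} T^{j+p} x) converge for μ-almost every x ∈ X, as N → ∞, to ∫ f0(x0) f1(x1) f2(x2) f3(x3) dμ_{S,T}(x0,x1,x2,x3). -/
open MeasureTheory Filter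

/-- The σ-algebra of `R`-invariant measurable sets. -/
def invSigma {X : Type*} [MeasurableSpace X] (R : X → X) : MeasurableSpace X where
  MeasurableSet' s := MeasurableSet s ∧ R ⁻¹' s = s
  measurableSet_empty := ⟨MeasurableSet.empty, rfl⟩
  measurableSet_compl s hs := ⟨hs.1.compl, by rw [Set.preimage_compl, hs.2]⟩
  measurableSet_iUnion f hf := ⟨MeasurableSet.iUnion fun i => (hf i).1, by
    rw [Set.preimage_iUnion]; exact Set.iUnion_congr fun i => (hf i).2⟩

/-- `μ2` is the relatively independent self-joining of `μ` over the σ-algebra of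
`R`-invariant sets: `∫ f0 ⊗ f1 dμ2 = ∫ E(f0|I_R)·E(f1|I_R) dμ` for all bounded
measurable `f0, f1`. -/
def IsRelIndJoining {X : Type*} [MeasurableSpace X] (μ : Measure X) (R : X → X)
    (μ2 : Measure (X × X)) : Prop :=
  ∀ f0 f1 : X → ℝ, Measurable f0 → Measurable f1 →
    (∃ C, ∀ x, |f0 x| ≤ C) → (∃ C, ∀ x, |f1 x| ≤ C) →
    ∫ p, f0 p.1 * f1 p.2 ∂μ2 =
      ∫ x, (μ[f0 | invSigma R]) x * (μ[f1 | invSigma R]) x ∂μ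

/-- `μ4` is the relatively independent self-joining of `μ2` over the σ-algebra of
`(T × T)`-invariant sets (the Host measure `μ_{S,T}` when `μ2 = μ_S`). -/
def IsHostJoining {X : Type*} [MeasurableSpace X] (μ2 : Measure (X × X)) (T : X → X)
    (μ4 : Measure (X × X × X × X)) : Prop :=
  ∀ f0 f1 f2 f3 : X → ℝ, Measurable f0 → Measurable f1 → Measurable f2 → Measurable f3 →
    (∃ C, ∀ x, |f0 x| ≤ C) → (∃ C, ∀ x, |f1 x| ≤ C) →
    (∃ C, ∀ x, |f2 x| ≤ C) → (∃ C, ∀ x, |f3 x| ≤ C) →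
    ∫ p, f0 p.1 * f1 p.2.1 * f2 p.2.2.1 * f3 p.2.2.2 ∂μ4 =
      ∫ q, (μ2[(fun r => f0 r.1 * f1 r.2) | invSigma (Prod.map T T)]) q *
           (μ2[(fun r => f2 r.1 * f3 r.2) | invSigma (Prod.map T T)]) q ∂μ2

/-!
The proof is an energy increment. Averages are taken over `i, j < N`, `k < K`, `p < P`, with `N`,
`K` and `P` tending to infinity and `K, P ≤ N`.

Two applications of the van der Corput inequality bound an average with bounded factors by the
`L²` norm of `E(r ⊗ r | I_{T×T})`, where `r` is its last factor and the expectation is taken on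
the extension `(Y × Y, ν_S, id × S, T × T)` of `(Y, ν, S, T)`; invariance of `ν_S` under `id × S`
is what makes that extension useful. On the other hand, if the last factor is measurable with
respect to `I_S ∨ I_T`, the averages converge: it is a limit of combinations of products `1_A 1_B`
with `A` in `I_S` and `B` in `I_T`, and these are absorbed into the two neighbouring factors,
which leaves averages controlled by pointwise ergodic theorems.

For a general last factor `f`, let `w` be `(I_S ∨ I_T)`-measurable with `|w| ≤ 1`, and write
`f = w + 2 r`. Either `E(r ⊗ r | I_{T×T})` is small, and then so is the oscillation of the averages;
or, on the extension, `f(x₁)` correlates with `r(x₀) E(r ⊗ r | I_{T×T})`, which is measurable with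
respect to `I_{id×S} ∨ I_{T×T}`, and correcting `w` by a multiple of it lowers `∫ (f - w)²` by a
fixed amount. The second case can occur only finitely many times along iterated extensions.

Relatively independent joinings exist on standard Borel spaces, so an arbitrary system is first
replaced by its factor of real-valued arrays recording the functions along orbits. Finally the
limit is computed by letting `N`, then `K`, then `P` tend to infinity, by ergodicity and the mean
ergodic theorem.
-/

open Finset (range)
open MeasurableSpace (invariants invariants_le)
open scoped BigOperators Topology ENNReal

section Averages

variable {u v : ℕ → ℝ} {C : ℝ}

lemma expect_range_const_le (hC : 0 ≤ C) (N : ℕ) : 𝔼 _i ∈ range N, C ≤ C := by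
  rcases (range N).eq_empty_or_nonempty with h | h
  · simpa [h]
  · rw [Finset.expect_const h]

lemma expect_range_le {N : ℕ} (hC : 0 ≤ C) (h : ∀ i < N, u i ≤ C) : 𝔼 i ∈ range N, u i ≤ C :=
  (Finset.expect_le_expect fun i hi ↦ h i (Finset.mem_range.1 hi)).trans
    (expect_range_const_le hC N)

lemma expect_range_const_add_le (hC : 0 ≤ C) (N : ℕ) (u : ℕ → ℝ) :
    𝔼 i ∈ range N, (C + u i) ≤ C + 𝔼 i ∈ range N, u i := by
  rw [Finset.expect_add_distrib]
  gcongr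
  exact expect_range_const_le hC N

lemma abs_expect_range_le (hC : 0 ≤ C) (h : ∀ i, |u i| ≤ C) (N : ℕ) : |𝔼 i ∈ range N, u i| ≤ C :=
  (Finset.abs_expect_le _ _).trans (expect_range_le hC fun i _ ↦ h i)

lemma sq_expect_le_expect_sq {ι : Type*} (s : Finset ι) (u : ι → ℝ) :
    (𝔼 i ∈ s, u i) ^ 2 ≤ 𝔼 i ∈ s, u i ^ 2 := by
  rcases s.eq_empty_or_nonempty with rfl | hs
  · simp
  · simpa [Finset.expect_const hs] using Finset.expect_mul_sq_le_sq_mul_sq s (fun _ ↦ (1 : ℝ)) u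

lemma expect_range_add_le {N p : ℕ} (hv : ∀ i, 0 ≤ v i) (hp : p ≤ N) :
    𝔼 j ∈ range N, v (j + p) ≤ 2 * 𝔼 j ∈ range (2 * N), v j := by
  have hsum : ∑ j ∈ range N, v (j + p) ≤ ∑ j ∈ range (2 * N), v j := by
    refine (Finset.sum_map (range N) (addRightEmbedding p) v).symm.trans_le <|
      Finset.sum_le_sum_of_subset_of_nonneg (fun j hj ↦ ?_) fun i _ _ ↦ hv i
    obtain ⟨a, ha, rfl⟩ := Finset.mem_map.1 hj
    simp only [Finset.mem_range, addRightEmbedding_apply] at ha ⊢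
    omega
  simp only [Finset.expect_eq_sum_div_card, Finset.card_range, Nat.cast_mul, Nat.cast_ofNat]
  calc (∑ j ∈ range N, v (j + p)) / N ≤ (∑ j ∈ range (2 * N), v j) / N := by gcongr
    _ = 2 * ((∑ j ∈ range (2 * N), v j) / (2 * N)) := by ring

lemma abs_expect_range_sub_expect_range_add_le (hu : ∀ i, |u i| ≤ C) (P h : ℕ) :
    |𝔼 p ∈ range P, u p - 𝔼 p ∈ range P, u (p + h)| ≤ 2 * C * h / P := by
  have hblock (a : ℕ) : |∑ p ∈ range h, u (a + p)| ≤ C * h := by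
    refine (Finset.abs_sum_le_sum_abs _ _).trans ((Finset.sum_le_sum fun i _ ↦ hu _).trans_eq ?_)
    simp [mul_comm]
  have htelescope : ∑ p ∈ range P, u p - ∑ p ∈ range P, u (p + h) =
      ∑ p ∈ range h, u (0 + p) - ∑ p ∈ range h, u (P + p) := by
    have h₁ := Finset.sum_range_add u P h
    have h₂ := Finset.sum_range_add u h P
    rw [add_comm h P] at h₂
    simp only [add_comm _ h, zero_add]
    linarith
  simp only [Finset.expect_eq_sum_div_card, Finset.card_range]
  rw [← sub_div, abs_div, Nat.abs_cast, htelescope]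
  gcongr
  exact (abs_sub _ _).trans (by linarith [hblock 0, hblock P])

lemma abs_expect_range_sub_expect_expect_le {H : ℕ} (hH : 0 < H) (hu : ∀ i, |u i| ≤ 1) (P : ℕ) :
    |𝔼 p ∈ range P, u p - 𝔼 p ∈ range P, 𝔼 h ∈ range H, u (p + h)| ≤ 2 * H / P := by
  rw [Finset.expect_comm, ← Finset.expect_const (Finset.nonempty_range_iff.2 hH.ne')
    (𝔼 p ∈ range P, u p), ← Finset.expect_sub_distrib]
  refine (Finset.abs_expect_le _ _).trans (expect_range_le (by positivity) fun h hh ↦ ?_)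
  refine (abs_expect_range_sub_expect_range_add_le hu P h).trans ?_
  rw [mul_one]
  gcongr

/- The van der Corput step: inside a window of length `N`, an average of length `P ≤ N` may be
replaced by one of fixed length `H`. -/
lemma expect_sq_expect_add_le {N P H : ℕ} (hH : 0 < H) (hP : P ≤ N) (hu : ∀ i, |u i| ≤ 1) :
    𝔼 j ∈ range N, (𝔼 p ∈ range P, u (j + p)) ^ 2 ≤
      8 * (H / P) ^ 2 + 4 * 𝔼 m ∈ range (2 * N), (𝔼 h ∈ range H, u (m + h)) ^ 2 := by
  have hpoint (j : ℕ) : (𝔼 p ∈ range P, u (j + p)) ^ 2 ≤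
      8 * (H / P) ^ 2 + 2 * 𝔼 p ∈ range P, (𝔼 h ∈ range H, u (j + p + h)) ^ 2 := by
    have hsmooth := sq_le_sq' (abs_le.1 <| abs_expect_range_sub_expect_expect_le
      hH (fun p ↦ hu (j + p)) P).1 (abs_le.1 <| abs_expect_range_sub_expect_expect_le
      hH (fun p ↦ hu (j + p)) P).2
    have hjensen := sq_expect_le_expect_sq (range P) fun p ↦ 𝔼 h ∈ range H, u (j + p + h)
    simp only [← add_assoc] at hsmooth
    set a := 𝔼 p ∈ range P, u (j + p)
    set b := 𝔼 p ∈ range P, 𝔼 h ∈ range H, u (j + p + h)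
    calc a ^ 2 = ((a - b) + b) ^ 2 := by ring
      _ ≤ 2 * (a - b) ^ 2 + 2 * b ^ 2 := by linarith [add_sq_le (a := a - b) (b := b)]
      _ ≤ 2 * (2 * H / P) ^ 2 + 2 * 𝔼 p ∈ range P, (𝔼 h ∈ range H, u (j + p + h)) ^ 2 := by gcongr
      _ = _ := by ring
  have hwindow : 𝔼 j ∈ range N, 𝔼 p ∈ range P, (𝔼 h ∈ range H, u (j + p + h)) ^ 2 ≤
      2 * 𝔼 m ∈ range (2 * N), (𝔼 h ∈ range H, u (m + h)) ^ 2 := by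
    rw [Finset.expect_comm]
    refine expect_range_le (mul_nonneg two_pos.le (Finset.expect_nonneg fun _ _ ↦ sq_nonneg _))
      fun p hp ↦ ?_
    exact expect_range_add_le (v := fun m ↦ (𝔼 h ∈ range H, u (m + h)) ^ 2)
      (fun _ ↦ sq_nonneg _) (hp.le.trans hP)
  calc 𝔼 j ∈ range N, (𝔼 p ∈ range P, u (j + p)) ^ 2
      ≤ 𝔼 j ∈ range N, (8 * (H / P) ^ 2 +
          2 * 𝔼 p ∈ range P, (𝔼 h ∈ range H, u (j + p + h)) ^ 2) :=
        Finset.expect_le_expect fun j _ ↦ hpoint j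
    _ ≤ 8 * (H / P) ^ 2 +
          2 * 𝔼 j ∈ range N, 𝔼 p ∈ range P, (𝔼 h ∈ range H, u (j + p + h)) ^ 2 := by
        rw [Finset.mul_expect]
        exact expect_range_const_add_le (by positivity) _ _
    _ ≤ _ := by linarith

end Averages

section CubeAverages

/-- The average of `u₀ ⊗ u₁ ⊗ u₂ ⊗ u₃` over the parallelograms
`(i, j), (i + k, j), (i, j + p), (i + k, j + p)` whose base point ranges over `[0, N)²` and whose
sides `k`, `p` range over `[0, K)` and `[0, P)`, where `q = (N, K, P)`. -/
noncomputable def cubeAverage (u₀ u₁ u₂ u₃ : ℕ → ℕ → ℝ) (q : ℕ × ℕ × ℕ) : ℝ :=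
  𝔼 i ∈ range q.1, 𝔼 j ∈ range q.1, 𝔼 k ∈ range q.2.1, 𝔼 p ∈ range q.2.2,
    u₀ i j * u₁ (i + k) j * u₂ i (j + p) * u₃ (i + k) (j + p)

variable {u₀ u₁ u₂ u₃ : ℕ → ℕ → ℝ} {N K P : ℕ}

lemma abs_mul_le_one {a b : ℝ} (ha : |a| ≤ 1) (hb : |b| ≤ 1) : |a * b| ≤ 1 := by
  rw [abs_mul]
  exact mul_le_one₀ ha (abs_nonneg _) hb

lemma abs_cubeAverage_le (h₀ : ∀ i j, |u₀ i j| ≤ 1) (h₁ : ∀ i j, |u₁ i j| ≤ 1)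
    (h₂ : ∀ i j, |u₂ i j| ≤ 1) (hK : K ≤ N) (hP : P ≤ N) :
    |cubeAverage u₀ u₁ u₂ u₃ (N, K, P)| ≤
      4 * 𝔼 i ∈ range (2 * N), 𝔼 j ∈ range (2 * N), |u₃ i j| := by
  have hnonneg (i : ℕ) : 0 ≤ 𝔼 j ∈ range (2 * N), |u₃ i j| :=
    Finset.expect_nonneg fun _ _ ↦ abs_nonneg _
  have hshift {k p : ℕ} (hk : k ≤ N) (hp : p ≤ N) :
      𝔼 i ∈ range N, 𝔼 j ∈ range N, |u₃ (i + k) (j + p)| ≤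
        4 * 𝔼 i ∈ range (2 * N), 𝔼 j ∈ range (2 * N), |u₃ i j| :=
    calc 𝔼 i ∈ range N, 𝔼 j ∈ range N, |u₃ (i + k) (j + p)|
        ≤ 𝔼 i ∈ range N, 2 * 𝔼 j ∈ range (2 * N), |u₃ (i + k) j| :=
          Finset.expect_le_expect fun i _ ↦
            expect_range_add_le (v := fun j ↦ |u₃ (i + k) j|) (fun _ ↦ abs_nonneg _) hp
      _ ≤ 2 * (2 * 𝔼 i ∈ range (2 * N), 𝔼 j ∈ range (2 * N), |u₃ i j|) := by
          rw [← Finset.mul_expect]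
          gcongr
          exact expect_range_add_le hnonneg hk
      _ = _ := by ring
  calc |cubeAverage u₀ u₁ u₂ u₃ (N, K, P)|
      ≤ 𝔼 i ∈ range N, 𝔼 j ∈ range N, 𝔼 k ∈ range K, 𝔼 p ∈ range P, |u₃ (i + k) (j + p)| := by
        refine (Finset.abs_expect_le _ _).trans <| Finset.expect_le_expect fun i _ ↦
          (Finset.abs_expect_le _ _).trans <| Finset.expect_le_expect fun j _ ↦
          (Finset.abs_expect_le _ _).trans <| Finset.expect_le_expect fun k _ ↦
          (Finset.abs_expect_le _ _).trans <| Finset.expect_le_expect fun p _ ↦ ?_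
        rw [abs_mul]
        exact mul_le_of_le_one_left (abs_nonneg _)
          (abs_mul_le_one (abs_mul_le_one (h₀ _ _) (h₁ _ _)) (h₂ _ _))
    _ = 𝔼 k ∈ range K, 𝔼 p ∈ range P, 𝔼 i ∈ range N, 𝔼 j ∈ range N, |u₃ (i + k) (j + p)| := by
        simp_rw [Finset.expect_comm (range N) (range K), Finset.expect_comm (range N) (range P)]
    _ ≤ _ := expect_range_le (mul_nonneg zero_le_four <| Finset.expect_nonneg fun i _ ↦ hnonneg i)
        fun k hk ↦ expect_range_le (mul_nonneg zero_le_four <| Finset.expect_nonneg fun i _ ↦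
          hnonneg i) fun p hp ↦ hshift (hk.le.trans hK) (hp.le.trans hP)

lemma cubeAverage_sq_le (h₀ : ∀ i j, |u₀ i j| ≤ 1) (h₁ : ∀ i j, |u₁ i j| ≤ 1)
    (h₂ : ∀ i j, |u₂ i j| ≤ 1) (h₃ : ∀ i j, |u₃ i j| ≤ 1) (hP : P ≤ N) {H : ℕ} (hH : 0 < H) :
    cubeAverage u₀ u₁ u₂ u₃ (N, K, P) ^ 2 ≤
      8 * (H / P) ^ 2 + 4 * 𝔼 i ∈ range N, 𝔼 k ∈ range K, 𝔼 m ∈ range (2 * N),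
        (𝔼 h ∈ range H, u₂ i (m + h) * u₃ (i + k) (m + h)) ^ 2 := by
  have hjensen : cubeAverage u₀ u₁ u₂ u₃ (N, K, P) ^ 2 ≤
      𝔼 i ∈ range N, 𝔼 k ∈ range K, 𝔼 j ∈ range N,
        (𝔼 p ∈ range P, u₂ i (j + p) * u₃ (i + k) (j + p)) ^ 2 := by
    simp only [cubeAverage, Finset.expect_comm (range N) (range K), mul_assoc (_ * _ : ℝ) (u₂ _ _),
      ← Finset.mul_expect]
    refine (sq_expect_le_expect_sq _ _).trans <| Finset.expect_le_expect fun k _ ↦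
      (sq_expect_le_expect_sq _ _).trans <| Finset.expect_le_expect fun i _ ↦
      (sq_expect_le_expect_sq _ _).trans <| Finset.expect_le_expect fun j _ ↦ ?_
    rw [mul_pow]
    exact mul_le_of_le_one_left (sq_nonneg _)
      ((sq_le_one_iff_abs_le_one _).2 (abs_mul_le_one (h₀ _ _) (h₁ _ _)))
  refine hjensen.trans <| (Finset.expect_le_expect fun i _ ↦ Finset.expect_le_expect fun k _ ↦
    expect_sq_expect_add_le (u := fun m ↦ u₂ i m * u₃ (i + k) m) hH hP
      fun m ↦ abs_mul_le_one (h₂ _ _) (h₃ _ _)).trans ?_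
  have hc : (0 : ℝ) ≤ 8 * (H / P) ^ 2 := by positivity
  simp only [Finset.mul_expect (range N), Finset.mul_expect (range K)]
  exact (Finset.expect_le_expect fun i _ ↦ expect_range_const_add_le hc _ _).trans
    (expect_range_const_add_le hc _ _)

lemma sq_expect_sq_expect_le (h₂ : ∀ i j, |u₂ i j| ≤ 1) (h₃ : ∀ i j, |u₃ i j| ≤ 1)
    (hK : K ≤ N) (M H : ℕ) {L : ℕ} (hL : 0 < L) :
    (𝔼 i ∈ range N, 𝔼 k ∈ range K, 𝔼 m ∈ range M,
        (𝔼 h ∈ range H, u₂ i (m + h) * u₃ (i + k) (m + h)) ^ 2) ^ 2 ≤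
      8 * (L / K) ^ 2 + 4 * 𝔼 h ∈ range H, 𝔼 h' ∈ range H, 𝔼 i ∈ range (2 * N), 𝔼 m ∈ range M,
        (𝔼 l ∈ range L, u₃ (i + l) (m + h) * u₃ (i + l) (m + h')) ^ 2 := by
  have hexpand : 𝔼 i ∈ range N, 𝔼 k ∈ range K, 𝔼 m ∈ range M,
        (𝔼 h ∈ range H, u₂ i (m + h) * u₃ (i + k) (m + h)) ^ 2 =
      𝔼 h ∈ range H, 𝔼 h' ∈ range H, 𝔼 m ∈ range M, 𝔼 i ∈ range N,
        (u₂ i (m + h) * u₂ i (m + h')) *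
          𝔼 k ∈ range K, u₃ (i + k) (m + h) * u₃ (i + k) (m + h') := by
    simp_rw [sq, Finset.expect_mul_expect, Finset.mul_expect,
      Finset.expect_comm (range M) (range H), Finset.expect_comm (range K) (range H),
      Finset.expect_comm (range N) (range H), Finset.expect_comm (range K) (range M),
      Finset.expect_comm (range N) (range M), mul_mul_mul_comm (u₂ _ _)]
  have hcorr (h h' m : ℕ) : (𝔼 i ∈ range N, (u₂ i (m + h) * u₂ i (m + h')) *
        𝔼 k ∈ range K, u₃ (i + k) (m + h) * u₃ (i + k) (m + h')) ^ 2 ≤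
      8 * (L / K) ^ 2 + 4 * 𝔼 i ∈ range (2 * N),
        (𝔼 l ∈ range L, u₃ (i + l) (m + h) * u₃ (i + l) (m + h')) ^ 2 := by
    refine (sq_expect_le_expect_sq _ _).trans <| (Finset.expect_le_expect fun i _ ↦ ?_).trans <|
      expect_sq_expect_add_le (u := fun i ↦ u₃ i (m + h) * u₃ i (m + h')) hL hK
        fun i ↦ abs_mul_le_one (h₃ _ _) (h₃ _ _)
    rw [mul_pow]
    exact mul_le_of_le_one_left (sq_nonneg _)
      ((sq_le_one_iff_abs_le_one _).2 (abs_mul_le_one (h₂ _ _) (h₂ _ _)))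
  rw [hexpand]
  refine (sq_expect_le_expect_sq _ _).trans <| (Finset.expect_le_expect fun h _ ↦
    (sq_expect_le_expect_sq _ _).trans <| Finset.expect_le_expect fun h' _ ↦
    (sq_expect_le_expect_sq _ _).trans <| Finset.expect_le_expect fun m _ ↦ hcorr h h' m).trans ?_
  have hc : (0 : ℝ) ≤ 8 * (L / K) ^ 2 := by positivity
  simp_rw [Finset.expect_comm (range (2 * N)) (range M), Finset.mul_expect (range H),
    Finset.mul_expect (range M)]
  exact (Finset.expect_le_expect fun h _ ↦ (Finset.expect_le_expect fun h' _ ↦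
    expect_range_const_add_le hc _ _).trans (expect_range_const_add_le hc _ _)).trans
    (expect_range_const_add_le hc _ _)

/- Two applications of van der Corput, one in each coordinate direction. -/
lemma cubeAverage_pow_four_le (h₀ : ∀ i j, |u₀ i j| ≤ 1) (h₁ : ∀ i j, |u₁ i j| ≤ 1)
    (h₂ : ∀ i j, |u₂ i j| ≤ 1) (h₃ : ∀ i j, |u₃ i j| ≤ 1) (hK : K ≤ N) (hP : P ≤ N)
    {H L : ℕ} (hH : 0 < H) (hL : 0 < L) :
    cubeAverage u₀ u₁ u₂ u₃ (N, K, P) ^ 4 ≤ 128 * (H / P) ^ 4 + 256 * (L / K) ^ 2 +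
      128 * 𝔼 h ∈ range H, 𝔼 h' ∈ range H, 𝔼 i ∈ range (2 * N), 𝔼 m ∈ range (2 * N),
        (𝔼 l ∈ range L, u₃ (i + l) (m + h) * u₃ (i + l) (m + h')) ^ 2 := by
  have hvdC₁ := cubeAverage_sq_le (K := K) h₀ h₁ h₂ h₃ hP hH
  have hvdC₂ := sq_expect_sq_expect_le h₂ h₃ hK (2 * N) H hL
  set a := cubeAverage u₀ u₁ u₂ u₃ (N, K, P)
  set b := 𝔼 i ∈ range N, 𝔼 k ∈ range K, 𝔼 m ∈ range (2 * N),
    (𝔼 h ∈ range H, u₂ i (m + h) * u₃ (i + k) (m + h)) ^ 2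
  calc a ^ 4 = (a ^ 2) ^ 2 := by ring
    _ ≤ (8 * (H / P) ^ 2 + 4 * b) ^ 2 := by gcongr
    _ ≤ 2 * ((8 * (H / P) ^ 2) ^ 2 + (4 * b) ^ 2) := add_sq_le
    _ = 128 * (H / P) ^ 4 + 32 * b ^ 2 := by ring
    _ ≤ _ := by linarith

end CubeAverages

section Birkhoff

variable {Y : Type*}

lemma birkhoffAverage_eq_expect (R : Y → Y) (f : Y → ℝ) (N : ℕ) (y : Y) :
    birkhoffAverage ℝ R f N y = 𝔼 i ∈ range N, f (R^[i] y) := by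
  simp [birkhoffAverage, birkhoffSum, Finset.expect_eq_sum_div_card, div_eq_inv_mul]

lemma partialSups_birkhoffSum_succ (R : Y → Y) (g : Y → ℝ) (n : ℕ) (y : Y) :
    partialSups (birkhoffSum R g · y) (n + 1) =
      max 0 (g y + partialSups (birkhoffSum R g · (R y)) n) := by
  rw [partialSups_add_one']
  simp only [Function.comp_def, birkhoffSum_succ', partialSups_const_add]
  simp

lemma partialSups_birkhoffSum_succ_sub_comp (R : Y → Y) (g : Y → ℝ) (n : ℕ) (y : Y) :
    partialSups (birkhoffSum R g · y) (n + 1) - partialSups (birkhoffSum R g · (R y)) n =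
      max (-partialSups (birkhoffSum R g · (R y)) n) (g y) := by
  simp only [partialSups_birkhoffSum_succ, ← max_sub_sub_right, zero_sub, add_sub_cancel_right]

lemma bddAbove_birkhoffSum_comp_iff (R : Y → Y) (g : Y → ℝ) (y : Y) :
    BddAbove (Set.range (birkhoffSum R g · (R y))) ↔
      BddAbove (Set.range (birkhoffSum R g · y)) := by
  constructor <;> rintro ⟨c, hc⟩ <;> rw [mem_upperBounds, Set.forall_mem_range] at hc
  · refine ⟨max 0 (g y + c), Set.forall_mem_range.2 fun n ↦ ?_⟩
    cases n with
    | zero => simp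
    | succ n => exact le_max_of_le_right (by simpa [birkhoffSum_succ'] using hc n)
  · refine ⟨c - g y, Set.forall_mem_range.2 fun n ↦ ?_⟩
    have := hc (n + 1)
    simp only [birkhoffSum_succ'] at this
    linarith

variable [MeasurableSpace Y] {ν : Measure Y} {R : Y → Y} {f g : Y → ℝ}

lemma invSigma_eq_invariants (R : Y → Y) : invSigma R = invariants R := rfl

lemma integral_comp_eq_of_measurePreserving {Z : Type*} [MeasurableSpace Z] {ρ : Measure Z}
    {π : Y → Z} (hπ : MeasurePreserving π ν ρ) {f : Z → ℝ} (hf : AEStronglyMeasurable f ρ) :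
    ∫ y, f (π y) ∂ν = ∫ z, f z ∂ρ := by
  rw [← hπ.map_eq] at hf ⊢
  exact (integral_map hπ.aemeasurable hf).symm

lemma measurable_birkhoffSum (hR : Measurable R) (hf : Measurable f) (n : ℕ) :
    Measurable (birkhoffSum R f n) :=
  Finset.measurable_fun_sum _ fun i _ ↦ hf.comp (hR.iterate i)

lemma measurable_partialSups_birkhoffSum (hR : Measurable R) (hg : Measurable g) (n : ℕ) :
    Measurable fun y ↦ partialSups (birkhoffSum R g · y) n := by
  induction n with
  | zero => simp
  | succ n ih =>
    simp only [partialSups_birkhoffSum_succ]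
    exact measurable_const.max (hg.add (ih.comp hR))

lemma integrable_partialSups_birkhoffSum (hR : MeasurePreserving R ν ν) (hg : Integrable g ν)
    (n : ℕ) : Integrable (fun y ↦ partialSups (birkhoffSum R g · y) n) ν := by
  induction n with
  | zero => simp
  | succ n ih =>
    simp only [partialSups_birkhoffSum_succ]
    exact (integrable_zero _ _ _).sup (hg.add (hR.integrable_comp_of_integrable ih))

/- The increments `M (n + 1) - M n ∘ R` of the maximal function are nonnegative on average; where
the Birkhoff sums are unbounded above they eventually equal `g`. -/
lemma setIntegral_nonneg_of_not_bddAbove_birkhoffSum [IsFiniteMeasure ν]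
    (hR : MeasurePreserving R ν ν) (hgm : Measurable g) (hg : Integrable g ν) :
    0 ≤ ∫ y in {y | ¬ BddAbove (Set.range (birkhoffSum R g · y))}, g y ∂ν := by
  set B := {y | ¬ BddAbove (Set.range (birkhoffSum R g · y))}
  have hBm : MeasurableSet B :=
    (measurableSet_bddAbove_range (measurable_birkhoffSum hR.measurable hgm)).compl
  have hBR : MeasurePreserving R (ν.restrict B) (ν.restrict B) := by
    have hinv : R ⁻¹' B = B := Set.ext fun y ↦ not_congr (bddAbove_birkhoffSum_comp_iff R g y)
    simpa only [hinv] using hR.restrict_preimage hBm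
  set M : ℕ → Y → ℝ := fun n y ↦ partialSups (birkhoffSum R g · y) n with hM
  have hMm n : Measurable (M n) := measurable_partialSups_birkhoffSum hR.measurable hgm n
  have hMi n : Integrable (M n) (ν.restrict B) :=
    integrable_partialSups_birkhoffSum hBR hg.integrableOn n
  have hM₀ n y : 0 ≤ M n y := by
    simpa using le_partialSups_of_le (birkhoffSum R g · y) (Nat.zero_le n)
  have hlim : Tendsto (fun n ↦ ∫ y in B, max (-M n (R y)) (g y) ∂ν) atTop
      (𝓝 (∫ y in B, g y ∂ν)) := by
    refine tendsto_integral_of_dominated_convergence (fun y ↦ |g y|)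
      (fun n ↦ (((hMm n).comp hR.measurable).neg.max hgm).aestronglyMeasurable)
      hg.abs.integrableOn (fun n ↦ .of_forall fun y ↦ ?_) ?_
    · rw [Real.norm_eq_abs, abs_le]
      exact ⟨(neg_abs_le _).trans (le_max_right _ _),
        max_le ((neg_nonpos.2 (hM₀ n _)).trans (abs_nonneg _)) (le_abs_self _)⟩
    · filter_upwards [ae_restrict_mem hBm] with y hy
      have htop : Tendsto (fun n ↦ M n (R y)) atTop atTop :=
        tendsto_atTop_atTop_of_monotone' (partialSups_monotone _) <| by
          rwa [bddAbove_range_partialSups, bddAbove_birkhoffSum_comp_iff]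
      refine tendsto_const_nhds.congr' ?_
      filter_upwards [htop.eventually_ge_atTop (-g y)] with n hn
      exact (max_eq_right (by linarith)).symm
  refine ge_of_tendsto' hlim fun n ↦ ?_
  simp_rw [hM, ← partialSups_birkhoffSum_succ_sub_comp]
  rw [integral_sub (g := fun y ↦ M n (R y)) (hMi _) (hBR.integrable_comp_of_integrable (hMi n)),
    integral_comp_eq_of_measurePreserving hBR (hMm n).aestronglyMeasurable, sub_nonneg]
  exact integral_mono (hMi n) (hMi _) fun y ↦ partialSups_monotone _ n.le_succ

lemma ae_bddAbove_birkhoffSum [IsFiniteMeasure ν] (hR : MeasurePreserving R ν ν)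
    (hgm : Measurable g) (hg : Integrable g ν)
    (hneg : ∀ B, MeasurableSet[invariants R] B → ν B ≠ 0 → ∫ y in B, g y ∂ν < 0) :
    ∀ᵐ y ∂ν, BddAbove (Set.range (birkhoffSum R g · y)) := by
  by_contra h
  refine (setIntegral_nonneg_of_not_bddAbove_birkhoffSum hR hgm hg).not_gt (hneg _ ⟨?_, ?_⟩ h)
  · exact (measurableSet_bddAbove_range (measurable_birkhoffSum hR.measurable hgm)).compl
  · exact Set.ext fun y ↦ not_congr (bddAbove_birkhoffSum_comp_iff R g y)

lemma ae_eventually_birkhoffAverage_le [IsFiniteMeasure ν] (hR : MeasurePreserving R ν ν)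
    (hfm : Measurable f) (hf : Integrable f ν) {e : ℝ} (he : 0 < e) :
    ∀ᵐ y ∂ν, ∀ᶠ N in atTop, birkhoffAverage ℝ R f N y ≤ (ν[f | invariants R]) y + 2 * e := by
  set E := ν[f | invariants R]
  have hEm : Measurable[invariants R] E := stronglyMeasurable_condExp.measurable
  have hcm : Measurable fun y ↦ E y + e :=
    (hEm.mono (invariants_le R) le_rfl).add_const e
  have hci : Integrable (fun y ↦ E y + e) ν := integrable_condExp.add (integrable_const e)
  have hcR : (fun y ↦ E y + e) ∘ R = fun y ↦ E y + e := by
    have := MeasurableSpace.comp_eq_of_measurable_invariants hEm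
    funext y
    exact congrArg (· + e) (congrFun this y)
  have hbdd := ae_bddAbove_birkhoffSum hR (hfm.sub hcm) (hf.sub hci) fun B hB hνB ↦ by
    simp only [Pi.sub_apply]
    rw [integral_sub hf.integrableOn hci.integrableOn,
      integral_add integrable_condExp.integrableOn (integrable_const e),
      setIntegral_condExp (invariants_le R) hf hB, setIntegral_const, smul_eq_mul]
    have : 0 < ν.real B := ENNReal.toReal_pos hνB (measure_ne_top _ _)
    nlinarith
  filter_upwards [hbdd] with y ⟨c, hc⟩
  have hsmall : Tendsto (fun N : ℕ ↦ c / N) atTop (𝓝 0) := tendsto_const_div_atTop_nhds_zero_nat c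
  filter_upwards [eventually_gt_atTop 0, hsmall.eventually_le_const he] with N hN hN'
  have hN₀ : (0 : ℝ) < N := Nat.cast_pos.2 hN
  have hdiff : birkhoffAverage ℝ R (f - fun y ↦ E y + e) N y ≤ c / N := by
    rw [birkhoffAverage, smul_eq_mul, ← div_eq_inv_mul]
    have := hc ⟨N, rfl⟩
    gcongr
  rw [birkhoffAverage_sub, Pi.sub_apply, birkhoffAverage_of_comp_eq ℝ hcR hN₀.ne',
    Pi.sub_apply] at hdiff
  linarith

/-- **Birkhoff's pointwise ergodic theorem.** -/
theorem ae_tendsto_birkhoffAverage [IsFiniteMeasure ν] (hR : MeasurePreserving R ν ν)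
    (hfm : Measurable f) (hf : Integrable f ν) :
    ∀ᵐ y ∂ν, Tendsto (birkhoffAverage ℝ R f · y) atTop (𝓝 ((ν[f | invariants R]) y)) := by
  have hpos (k : ℕ) : (0 : ℝ) < 1 / (k + 1) := Nat.one_div_pos_of_nat
  have hupper := ae_all_iff.2 fun k ↦ ae_eventually_birkhoffAverage_le hR hfm hf (hpos k)
  have hlower := ae_all_iff.2 fun k ↦ ae_eventually_birkhoffAverage_le hR hfm.neg hf.neg (hpos k)
  filter_upwards [hupper, hlower, condExp_neg f (invariants R)] with y hu hl hneg
  refine Metric.tendsto_nhds.2 fun δ hδ ↦ ?_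
  obtain ⟨k, hk⟩ := exists_nat_one_div_lt (half_pos hδ)
  filter_upwards [hu k, hl k] with N huN hlN
  rw [birkhoffAverage_neg, hneg, Pi.neg_apply, Pi.neg_apply, Pi.neg_apply] at hlN
  rw [Real.dist_eq, abs_sub_lt_iff]
  constructor <;> linarith

end Birkhoff

section GridAverages

lemma limUnder_eq_of_tendsto_sub {u v : ℕ → ℝ} (h : Tendsto (u - v) atTop (𝓝 0)) :
    limUnder atTop u = limUnder atTop v := by
  have hiff (l : ℝ) : Tendsto u atTop (𝓝 l) ↔ Tendsto v atTop (𝓝 l) :=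
    ⟨fun hu ↦ by simpa using hu.sub h, fun hv ↦ by simpa using hv.add h⟩
  by_cases hv : ∃ l, Tendsto v atTop (𝓝 l)
  · obtain ⟨l, hl⟩ := hv
    rw [hl.limUnder_eq, ((hiff l).2 hl).limUnder_eq]
  · rw [limUnder_of_not_tendsto hv, limUnder_of_not_tendsto (by simpa only [hiff] using hv)]

variable {Y : Type*}

/-- The tail maximal function of the sequence `a N - F`. -/
noncomputable def tailSup (a : ℕ → Y → ℝ) (F : Y → ℝ) (n : ℕ) (y : Y) : ℝ :=
  ⨆ m, |a (n + m) y - F y|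

section TailSup

variable {a : ℕ → Y → ℝ} {F G : Y → ℝ}

lemma tailSup_nonneg (a : ℕ → Y → ℝ) (F : Y → ℝ) (n : ℕ) (y : Y) : 0 ≤ tailSup a F n y :=
  Real.iSup_nonneg fun _ ↦ abs_nonneg _

lemma tailSup_le (hG : ∀ N y, |a N y| ≤ G y) (n : ℕ) (y : Y) : tailSup a F n y ≤ G y + |F y| :=
  ciSup_le fun _ ↦ (abs_sub _ _).trans (by gcongr; exact hG _ y)

lemma abs_sub_le_tailSup (hG : ∀ N y, |a N y| ≤ G y) {n N : ℕ} (hN : n ≤ N) (y : Y) :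
    |a N y - F y| ≤ tailSup a F n y := by
  obtain ⟨m, rfl⟩ := Nat.exists_eq_add_of_le hN
  refine le_ciSup (f := fun m ↦ |a (n + m) y - F y|) ⟨G y + |F y|, ?_⟩ m
  exact Set.forall_mem_range.2 fun _ ↦ (abs_sub _ _).trans (by gcongr; exact hG _ y)

lemma tailSup_self_le (hG : ∀ N y, |a N y| ≤ G y) (F : Y → ℝ) (n : ℕ) (y : Y) :
    tailSup a (a n) n y ≤ 2 * tailSup a F n y := by
  refine ciSup_le fun m ↦ ?_
  calc |a (n + m) y - a n y| ≤ |a (n + m) y - F y| + |a n y - F y| := by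
        rw [abs_sub_comm (a n y)]
        exact abs_sub_le _ _ _
    _ ≤ tailSup a F n y + tailSup a F n y :=
        add_le_add (abs_sub_le_tailSup hG (n.le_add_right m) y) (abs_sub_le_tailSup hG le_rfl y)
    _ = _ := (two_mul _).symm

end TailSup

/-- The average of `φ` along the square `[0, N)²` of the orbit of `y` under `S` and `T`. -/
noncomputable def gridAverage (S T : Y → Y) (φ : Y → ℝ) (N : ℕ) (y : Y) : ℝ :=
  𝔼 i ∈ range N, 𝔼 j ∈ range N, φ (S^[i] (T^[j] y))

lemma gridAverage_eq_expect_expect (S T : Y → Y) (φ : Y → ℝ) (N : ℕ) (y : Y) :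
    gridAverage S T φ N y = 𝔼 j ∈ range N, 𝔼 i ∈ range N, φ (S^[i] (T^[j] y)) :=
  Finset.expect_comm _ _ _

section GridAverage

variable {S T : Y → Y} {φ : Y → ℝ} {C : ℝ}

lemma abs_gridAverage_comp_left_sub_le (hcomm : Function.Commute S T) (hC : ∀ y, |φ y| ≤ C)
    (N : ℕ) (y : Y) : |gridAverage S T φ N (S y) - gridAverage S T φ N y| ≤ 2 * C / N := by
  have hC₀ : 0 ≤ C := (abs_nonneg _).trans (hC y)
  rw [abs_sub_comm, gridAverage_eq_expect_expect, gridAverage_eq_expect_expect,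
    ← Finset.expect_sub_distrib]
  refine abs_expect_range_le (by positivity) (fun j ↦ ?_) N
  simpa [← (hcomm.iterate_right j) y] using
    abs_expect_range_sub_expect_range_add_le (u := fun i ↦ φ (S^[i] (T^[j] y))) (fun _ ↦ hC _) N 1

lemma abs_gridAverage_comp_right_sub_le (hC : ∀ y, |φ y| ≤ C) (N : ℕ) (y : Y) :
    |gridAverage S T φ N (T y) - gridAverage S T φ N y| ≤ 2 * C / N := by
  have hC₀ : 0 ≤ C := (abs_nonneg _).trans (hC y)
  rw [abs_sub_comm, gridAverage, gridAverage, ← Finset.expect_sub_distrib]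
  refine abs_expect_range_le (by positivity) (fun i ↦ ?_) N
  simpa using
    abs_expect_range_sub_expect_range_add_le (u := fun j ↦ φ (S^[i] (T^[j] y))) (fun _ ↦ hC _) N 1

lemma abs_gridAverage_sub_le {ψ χ : Y → ℝ} (h : ∀ z, |φ z - ψ z| ≤ χ z) (N : ℕ)
    (y : Y) : |gridAverage S T φ N y - gridAverage S T ψ N y| ≤ gridAverage S T χ N y := by
  simp only [gridAverage, ← Finset.expect_sub_distrib]
  exact (Finset.abs_expect_le _ _).trans <| Finset.expect_le_expect fun i _ ↦
    (Finset.abs_expect_le _ _).trans <| Finset.expect_le_expect fun j _ ↦ h _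

end GridAverage

variable [MeasurableSpace Y] {ν : Measure Y}

lemma ae_exists_lt_of_tendsto_integral_zero {e : ℕ → Y → ℝ} (h₀ : ∀ n, 0 ≤ᵐ[ν] e n)
    (hi : ∀ n, Integrable (e n) ν) (hlim : Tendsto (fun n ↦ ∫ y, e n y ∂ν) atTop (𝓝 0)) :
    ∀ᵐ y ∂ν, ∀ δ > 0, ∃ n, e n y < δ := by
  have hinf : ∫⁻ y, ⨅ n, ENNReal.ofReal (e n y) ∂ν = 0 := by
    have hle n : ∫⁻ y, ⨅ n, ENNReal.ofReal (e n y) ∂ν ≤ ENNReal.ofReal (∫ y, e n y ∂ν) := by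
      rw [ofReal_integral_eq_lintegral_ofReal (hi n) (h₀ n)]
      exact lintegral_mono fun y ↦ iInf_le _ n
    have hlim' := (ENNReal.continuous_ofReal.tendsto 0).comp hlim
    exact le_antisymm (ENNReal.ofReal_zero ▸ ge_of_tendsto' hlim' hle) zero_le
  rw [lintegral_eq_zero_iff' (.iInf fun n ↦ (hi n).aemeasurable.ennreal_ofReal)] at hinf
  filter_upwards [hinf] with y hy δ hδ
  obtain ⟨n, hn⟩ := iInf_lt_iff.1 (hy.trans_lt (ENNReal.ofReal_pos.2 hδ))
  exact ⟨n, (ENNReal.ofReal_lt_ofReal_iff hδ).1 hn⟩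

section TailSup

variable {a : ℕ → Y → ℝ} {F G : Y → ℝ}

lemma measurable_tailSup (ha : ∀ N, Measurable (a N)) (hF : Measurable F) (n : ℕ) :
    Measurable (tailSup a F n) :=
  Measurable.iSup fun _ ↦ ((ha _).sub hF).abs

lemma integrable_tailSup (ha : ∀ N, Measurable (a N)) (hG : ∀ N y, |a N y| ≤ G y)
    (hGi : Integrable G ν) (hF : Measurable F) (hFi : Integrable F ν) (n : ℕ) :
    Integrable (tailSup a F n) ν :=
  (hGi.add hFi.abs).mono' (measurable_tailSup ha hF n).aestronglyMeasurable <| .of_forall fun y ↦ by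
    simpa [abs_of_nonneg (tailSup_nonneg a F n y)] using tailSup_le hG n y

lemma tendsto_integral_tailSup (ha : ∀ N, Measurable (a N)) (hG : ∀ N y, |a N y| ≤ G y)
    (hGi : Integrable G ν) (hF : Measurable F) (hFi : Integrable F ν)
    (hlim : ∀ᵐ y ∂ν, Tendsto (a · y) atTop (𝓝 (F y))) :
    Tendsto (fun n ↦ ∫ y, tailSup a F n y ∂ν) atTop (𝓝 0) := by
  rw [← integral_zero Y ℝ (μ := ν)]
  refine tendsto_integral_of_dominated_convergence (fun y ↦ G y + |F y|)
    (fun n ↦ (measurable_tailSup ha hF n).aestronglyMeasurable) (hGi.add hFi.abs)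
    (fun n ↦ .of_forall fun y ↦ ?_) ?_
  · simpa [abs_of_nonneg (tailSup_nonneg a F n y)] using tailSup_le hG n y
  · filter_upwards [hlim] with y hy
    refine tendsto_order.2 ⟨fun c hc ↦ .of_forall fun n ↦ hc.trans_le (tailSup_nonneg a F n y),
      fun c hc ↦ ?_⟩
    obtain ⟨N, hN⟩ := Metric.tendsto_atTop.1 hy (c / 2) (half_pos hc)
    filter_upwards [eventually_ge_atTop N] with n hn
    exact (ciSup_le fun m ↦ (hN (n + m) (by omega)).le).trans_lt (half_lt_self hc)

end TailSup

variable {S T : Y → Y} {φ : Y → ℝ} {C : ℝ}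

/-- **Maker's ergodic theorem.** -/
theorem ae_tendsto_expect_of_tendsto [IsFiniteMeasure ν] (hT : MeasurePreserving T ν ν)
    {a : ℕ → Y → ℝ} {F G : Y → ℝ} (ha : ∀ N, Measurable (a N)) (hG : ∀ N y, |a N y| ≤ G y)
    (hGi : Integrable G ν) (hF : Measurable F)
    (hlim : ∀ᵐ y ∂ν, Tendsto (a · y) atTop (𝓝 (F y))) :
    ∀ᵐ y ∂ν, Tendsto (fun N ↦ 𝔼 j ∈ range N, a N (T^[j] y)) atTop
      (𝓝 ((ν[F | invariants T]) y)) := by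
  have hFi : Integrable F ν := hGi.mono' hF.aestronglyMeasurable <| by
    filter_upwards [hlim] with y hy
    exact le_of_tendsto' hy.abs fun N ↦ hG N y
  set τ := tailSup a F
  have hτi n : Integrable (τ n) ν := integrable_tailSup ha hG hGi hF hFi n
  have hsmall : ∀ᵐ y ∂ν, ∀ δ > 0, ∃ n, (ν[τ n | invariants T]) y < δ := by
    refine ae_exists_lt_of_tendsto_integral_zero
      (fun n ↦ condExp_nonneg (.of_forall (tailSup_nonneg a F n))) (fun n ↦ integrable_condExp) ?_
    simpa only [integral_condExp (invariants_le T)] using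
      tendsto_integral_tailSup ha hG hGi hF hFi hlim
  filter_upwards [ae_tendsto_birkhoffAverage hT hF hFi, hsmall, ae_all_iff.2 fun n ↦
    ae_tendsto_birkhoffAverage hT (measurable_tailSup ha hF n) (hτi n)] with y hyF hyδ hyτ
  simp only [birkhoffAverage_eq_expect] at hyF hyτ
  refine Metric.tendsto_nhds.2 fun δ hδ ↦ ?_
  obtain ⟨n, hn⟩ := hyδ (δ / 2) (half_pos hδ)
  filter_upwards [(hyτ n).eventually_lt_const hn, Metric.tendsto_nhds.1 hyF (δ / 2) (half_pos hδ),
    eventually_ge_atTop n] with N hτN hFN hN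
  have htail : |𝔼 j ∈ range N, a N (T^[j] y) - 𝔼 j ∈ range N, F (T^[j] y)| ≤
      𝔼 j ∈ range N, τ n (T^[j] y) := by
    rw [← Finset.expect_sub_distrib]
    exact (Finset.abs_expect_le _ _).trans <|
      Finset.expect_le_expect fun j _ ↦ abs_sub_le_tailSup hG hN _
  calc dist (𝔼 j ∈ range N, a N (T^[j] y)) ((ν[F | invariants T]) y)
      ≤ |𝔼 j ∈ range N, a N (T^[j] y) - 𝔼 j ∈ range N, F (T^[j] y)| +
          dist (𝔼 j ∈ range N, F (T^[j] y)) ((ν[F | invariants T]) y) := dist_triangle _ _ _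
    _ < δ := by linarith

lemma measurable_expect {ι : Type*} (s : Finset ι) {u : ι → Y → ℝ}
    (hu : ∀ i, Measurable (u i)) : Measurable fun y ↦ 𝔼 i ∈ s, u i y := by
  simp only [Finset.expect_eq_sum_div_card]
  exact (Finset.measurable_fun_sum _ fun i _ ↦ hu i).div_const _

lemma measurable_gridAverage (hS : Measurable S) (hT : Measurable T) (hφ : Measurable φ) (N : ℕ) :
    Measurable (gridAverage S T φ N) :=
  measurable_expect _ fun i ↦ measurable_expect _ fun j ↦
    hφ.comp ((hS.iterate i).comp (hT.iterate j))

lemma integrable_of_abs_le [IsFiniteMeasure ν] (hφ : Measurable φ) (hC : ∀ y, |φ y| ≤ C) :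
    Integrable φ ν :=
  .of_bound hφ.aestronglyMeasurable C (.of_forall hC)

theorem ae_tendsto_gridAverage [IsFiniteMeasure ν] (hS : MeasurePreserving S ν ν)
    (hT : MeasurePreserving T ν ν) (hφ : Measurable φ) (hC : ∀ y, |φ y| ≤ C) :
    ∀ᵐ y ∂ν, Tendsto (gridAverage S T φ · y) atTop
      (𝓝 ((ν[ν[φ | invariants S] | invariants T]) y)) := by
  have hE : Measurable (ν[φ | invariants S]) :=
    stronglyMeasurable_condExp.measurable.mono (invariants_le S) le_rfl
  have hbound (N : ℕ) (y : Y) : |𝔼 i ∈ range N, φ (S^[i] y)| ≤ C :=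
    abs_expect_range_le ((abs_nonneg _).trans (hC y)) (fun i ↦ hC _) N
  filter_upwards [ae_tendsto_expect_of_tendsto hT
    (fun N ↦ measurable_expect (range N) fun i ↦
      (show Measurable fun y ↦ φ (S^[i] y) from hφ.comp (hS.measurable.iterate i))) hbound
    (integrable_const C) hE <| by
      simpa only [birkhoffAverage_eq_expect] using
        ae_tendsto_birkhoffAverage hS hφ (integrable_of_abs_le hφ hC)] with y hy
  simpa only [gridAverage_eq_expect_expect] using hy

lemma ae_eq_integral_of_comp_eq [IsProbabilityMeasure ν]
    (herg : ∀ s : Set Y, MeasurableSet s → S ⁻¹' s = s → T ⁻¹' s = s → ν s = 0 ∨ ν s = 1)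
    {F : Y → ℝ} (hF : Measurable F) (hFS : F ∘ S = F) (hFT : F ∘ T = F) :
    ∀ᵐ y ∂ν, F y = ∫ z, F z ∂ν := by
  obtain ⟨c, hc⟩ := exists_eventuallyEq_const_of_forall_separating MeasurableSet
    (l := ae ν) (f := F) fun U hU ↦ by
      rcases herg (F ⁻¹' U) (hF hU) (by rw [← Set.preimage_comp, hFS])
        (by rw [← Set.preimage_comp, hFT]) with h | h
      · exact .inr (measure_eq_zero_iff_ae_notMem.1 h)
      · exact .inl ((mem_ae_iff_prob_eq_one (hF hU)).2 h)
  filter_upwards [hc] with y hy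
  rw [integral_congr_ae hc, hy]
  simp

theorem ae_tendsto_gridAverage_integral [IsProbabilityMeasure ν] (hS : MeasurePreserving S ν ν)
    (hT : MeasurePreserving T ν ν) (hcomm : Function.Commute S T)
    (herg : ∀ s : Set Y, MeasurableSet s → S ⁻¹' s = s → T ⁻¹' s = s → ν s = 0 ∨ ν s = 1)
    (hφ : Measurable φ) (hC : ∀ y, |φ y| ≤ C) :
    ∀ᵐ y ∂ν, Tendsto (gridAverage S T φ · y) atTop (𝓝 (∫ z, φ z ∂ν)) := by
  set F : Y → ℝ := fun y ↦ limUnder atTop (gridAverage S T φ · y)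
  have hFm : Measurable F := (StronglyMeasurable.limUnder fun N ↦
    (measurable_gridAverage hS.measurable hT.measurable hφ N).stronglyMeasurable).measurable
  have hvanish : Tendsto (fun N : ℕ ↦ 2 * C / N) atTop (𝓝 0) :=
    tendsto_const_div_atTop_nhds_zero_nat _
  have hFS : F ∘ S = F := funext fun y ↦ limUnder_eq_of_tendsto_sub <|
    squeeze_zero_norm (fun N ↦ abs_gridAverage_comp_left_sub_le hcomm hC N y) hvanish
  have hFT : F ∘ T = F := funext fun y ↦ limUnder_eq_of_tendsto_sub <|
    squeeze_zero_norm (fun N ↦ abs_gridAverage_comp_right_sub_le hC N y) hvanish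
  have hlim := ae_tendsto_gridAverage hS hT hφ hC
  have hint : ∫ y, F y ∂ν = ∫ z, φ z ∂ν := by
    rw [integral_congr_ae (hlim.mono fun y hy ↦ hy.limUnder_eq),
      integral_condExp (invariants_le T), integral_condExp (invariants_le S)]
  filter_upwards [hlim, ae_eq_integral_of_comp_eq herg hFm hFS hFT] with y hy hFy
  rw [← hint, ← hFy]
  exact tendsto_nhds_limUnder ⟨_, hy⟩

section MeanErgodic

variable [IsFiniteMeasure ν] {R : Y → Y} {f : Y → ℝ}

lemma tendsto_integral_mul_expect (hR : MeasurePreserving R ν ν) {g : Y → ℝ} (hf : Measurable f)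
    (hC : ∀ y, |f y| ≤ C) (hg : Integrable g ν) :
    Tendsto (fun N ↦ ∫ y, g y * 𝔼 i ∈ range N, f (R^[i] y) ∂ν) atTop
      (𝓝 (∫ y, g y * (ν[f | invariants R]) y ∂ν)) := by
  refine tendsto_integral_of_dominated_convergence (fun y ↦ |g y| * C) (fun N ↦ ?_)
    (hg.abs.mul_const C) (fun N ↦ .of_forall fun y ↦ ?_) ?_
  · exact hg.aestronglyMeasurable.mul (measurable_expect _ fun i ↦
      hf.comp (hR.measurable.iterate i)).aestronglyMeasurable
  · rw [Real.norm_eq_abs, abs_mul]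
    gcongr
    exact abs_expect_range_le ((abs_nonneg _).trans (hC y)) (fun i ↦ hC _) N
  · filter_upwards [ae_tendsto_birkhoffAverage hR hf (integrable_of_abs_le hf hC)] with y hy
    simpa only [birkhoffAverage_eq_expect] using hy.const_mul (g y)

lemma tendsto_integral_sq_expect (hR : MeasurePreserving R ν ν) (hf : Measurable f)
    (hC : ∀ y, |f y| ≤ C) :
    Tendsto (fun N ↦ ∫ y, (𝔼 i ∈ range N, f (R^[i] y)) ^ 2 ∂ν) atTop
      (𝓝 (∫ y, (ν[f | invariants R]) y ^ 2 ∂ν)) := by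
  refine tendsto_integral_of_dominated_convergence (fun _ ↦ C ^ 2) (fun N ↦ ?_)
    (integrable_const _) (fun N ↦ .of_forall fun y ↦ ?_) ?_
  · exact ((measurable_expect _ fun i ↦
      hf.comp (hR.measurable.iterate i)).pow_const 2).aestronglyMeasurable
  · rw [Real.norm_eq_abs, abs_pow]
    gcongr
    exact abs_expect_range_le ((abs_nonneg _).trans (hC y)) (fun i ↦ hC _) N
  · filter_upwards [ae_tendsto_birkhoffAverage hR hf (integrable_of_abs_le hf hC)] with y hy
    simpa only [birkhoffAverage_eq_expect] using hy.pow 2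

lemma condExp_invariants_comp_of_commute {Q : Y → Y} (hR : MeasurePreserving R ν ν)
    (hQ : MeasurePreserving Q ν ν) (hcomm : Function.Commute R Q) (hf : Measurable f)
    (hfi : Integrable f ν) :
    ν[f ∘ Q | invariants R] =ᵐ[ν] ν[f | invariants R] ∘ Q := by
  filter_upwards [hQ.quasiMeasurePreserving.ae (ae_tendsto_birkhoffAverage hR hf hfi),
    ae_tendsto_birkhoffAverage hR (hf.comp hQ.measurable) (hQ.integrable_comp_of_integrable hfi)]
    with y hQy hy
  refine tendsto_nhds_unique hy (hQy.congr fun N ↦ ?_)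
  simp only [birkhoffAverage_eq_expect, Function.comp_apply, (hcomm.iterate_left _).eq]

end MeanErgodic

end GridAverages

section Oscillation

/-- The asymptotic oscillation of `a` along `l`: it vanishes exactly when `a` converges. -/
noncomputable def osc {ι : Type*} (l : Filter ι) (a : ι → ℝ) : ℝ≥0∞ :=
  limsup (fun q : ι × ι ↦ edist (a q.1) (a q.2)) (l ×ˢ l)

variable {ι : Type*} {l : Filter ι} {a b d : ι → ℝ} {δ : ℝ} {Y : Type*} [MeasurableSpace Y]
  {ν : Measure Y} {A B : ι → Y → ℝ}

lemma measurable_osc [Countable ι] [l.IsCountablyGenerated] (hA : ∀ q, Measurable (A q)) :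
    Measurable fun y ↦ osc l (A · y) := by
  obtain ⟨s, hs⟩ := (l ×ˢ l).exists_antitone_basis
  exact Measurable.limsup' (fun q ↦ (hA q.1).edist (hA q.2)) ⟨hs.toHasBasis, Set.to_countable _⟩
    fun i ↦ Set.to_countable _

variable [l.NeBot]

lemma osc_eq_zero_iff : osc l a = 0 ↔ ∃ c, Tendsto a l (𝓝 c) := by
  rw [← cauchy_map_iff_exists_tendsto, cauchy_map_iff', osc, ← nonpos_iff_eq_zero, limsup_le_iff,
    uniformity_basis_edist.tendsto_right_iff]
  rfl

lemma osc_le_osc_add (h : ∀ᶠ q in l, |a q - b q| ≤ d q) (hd : Tendsto d l (𝓝 δ)) :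
    osc l a ≤ osc l b + ENNReal.ofReal (2 * δ) := by
  have hlt : ∀ δ' > δ, osc l a ≤ osc l b + ENNReal.ofReal (2 * δ') := fun δ' hδ' ↦ by
    have hab : ∀ᶠ q in l, edist (a q) (b q) ≤ ENNReal.ofReal δ' := by
      filter_upwards [h, hd.eventually_le_const hδ'] with q hq hq'
      rw [edist_dist]
      exact ENNReal.ofReal_le_ofReal (hq.trans hq')
    rw [osc, osc, ← limsup_add_const _ _ _ (by isBoundedDefault) (by isBoundedDefault)]
    refine limsup_le_limsup ?_
    filter_upwards [hab.prod_mk hab] with q ⟨hq₁, hq₂⟩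
    calc edist (a q.1) (a q.2)
        ≤ edist (a q.1) (b q.1) + edist (b q.1) (b q.2) + edist (b q.2) (a q.2) :=
          edist_triangle4 _ _ _ _
      _ ≤ ENNReal.ofReal δ' + edist (b q.1) (b q.2) + ENNReal.ofReal δ' := by
          rw [edist_comm (b q.2)]
          gcongr
      _ = _ := by
          rw [ENNReal.ofReal_mul zero_le_two, ENNReal.ofReal_ofNat]
          ring
  have hcont : Tendsto (fun δ' ↦ osc l b + ENNReal.ofReal (2 * δ')) (𝓝[>] δ)
      (𝓝 (osc l b + ENNReal.ofReal (2 * δ))) :=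
    tendsto_nhdsWithin_of_tendsto_nhds <| ((ENNReal.continuous_ofReal.comp
      (continuous_const_mul 2)).const_add _).tendsto δ
  exact ge_of_tendsto hcont (eventually_nhdsWithin_of_forall hlt)

lemma osc_add_const_mul_le {c : ℝ} (ha : Tendsto a l (𝓝 c)) (k : ℝ) :
    osc l (fun q ↦ a q + k * b q) ≤ ENNReal.ofReal |k| * osc l b :=
  calc osc l (fun q ↦ a q + k * b q)
      ≤ osc l (fun q ↦ c + k * b q) + ENNReal.ofReal (2 * 0) := by
        refine osc_le_osc_add (d := fun q ↦ |a q - c|) (.of_forall fun q ↦ ?_) ?_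
        · rw [add_sub_add_right_eq_sub]
        · simpa using (ha.sub_const c).abs
    _ = osc l fun q ↦ c + k * b q := by rw [mul_zero, ENNReal.ofReal_zero, add_zero]
    _ = ENNReal.ofReal |k| * osc l b := by
        simp only [osc, edist_dist, Real.dist_eq, add_sub_add_left_eq_sub, ← mul_sub, abs_mul,
          ENNReal.ofReal_mul (abs_nonneg k)]
        exact ENNReal.limsup_const_mul_of_ne_top ENNReal.ofReal_ne_top

lemma lintegral_osc_eq_zero_iff [Countable ι] [l.IsCountablyGenerated]
    (hA : ∀ q, Measurable (A q)) :
    ∫⁻ y, osc l (A · y) ∂ν = 0 ↔ ∀ᵐ y ∂ν, ∃ c, Tendsto (A · y) l (𝓝 c) := by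
  rw [lintegral_eq_zero_iff (measurable_osc hA)]
  exact eventually_congr (.of_forall fun y ↦ osc_eq_zero_iff)

lemma lintegral_osc_le [IsProbabilityMeasure ν] {S T : Y → Y} (hS : MeasurePreserving S ν ν)
    (hT : MeasurePreserving T ν ν) {N : ι → ℕ} (hN : Tendsto N l atTop) (hd : Tendsto d l (𝓝 δ))
    {g : Y → ℝ} (hg : Measurable g) {C : ℝ} (hC : ∀ y, |g y| ≤ C)
    (h : ∀ᵐ y ∂ν, ∀ᶠ q in l, |A q y - B q y| ≤ d q + gridAverage S T g (N q) y) :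
    ∫⁻ y, osc l (A · y) ∂ν ≤
      ∫⁻ y, osc l (B · y) ∂ν + ENNReal.ofReal (2 * (δ + ∫ y, g y ∂ν)) := by
  set F := ν[ν[g | invariants S] | invariants T]
  have hlim : ∀ᵐ y ∂ν, Tendsto (fun q ↦ d q + gridAverage S T g (N q) y) l (𝓝 (δ + F y)) := by
    filter_upwards [ae_tendsto_gridAverage hS hT hg hC] with y hy
    exact hd.add (hy.comp hN)
  have hF : Integrable F ν := integrable_condExp
  have hFm : Measurable fun y ↦ 2 * (δ + F y) :=
    ((stronglyMeasurable_condExp.measurable.mono (invariants_le T) le_rfl).const_add δ).const_mul 2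
  have hnonneg : 0 ≤ᵐ[ν] fun y ↦ 2 * (δ + F y) := by
    filter_upwards [h, hlim] with y hy hlimy
    exact mul_nonneg zero_le_two <|
      ge_of_tendsto hlimy (hy.mono fun q hq ↦ (abs_nonneg _).trans hq)
  have hint : ∫ y, 2 * (δ + F y) ∂ν = 2 * (δ + ∫ y, g y ∂ν) := by
    rw [integral_const_mul, integral_add (integrable_const _) hF,
      integral_condExp (invariants_le T), integral_condExp (invariants_le S)]
    simp
  have hi : Integrable (fun y ↦ 2 * (δ + F y)) ν := ((integrable_const δ).add hF).const_mul 2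
  rw [← hint, ofReal_integral_eq_lintegral_ofReal hi hnonneg,
    ← lintegral_add_right _ hFm.ennreal_ofReal]
  refine lintegral_mono_ae ?_
  filter_upwards [h, hlim] with y hy hlimy
  exact osc_le_osc_add hy hlimy

end Oscillation

section Windows

/-- The filter of triples `(N, K, P)` with `N, K, P → ∞`, subject to `K ≤ N` and `P ≤ N`. -/
def windows : Filter (ℕ × ℕ × ℕ) :=
  (atTop ×ˢ atTop ×ˢ atTop) ⊓ 𝓟 {q | q.2.1 ≤ q.1 ∧ q.2.2 ≤ q.1}

lemma eventually_windows_le : ∀ᶠ q in windows, q.2.1 ≤ q.1 ∧ q.2.2 ≤ q.1 :=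
  mem_inf_of_right (mem_principal_self _)

lemma tendsto_diag_windows : Tendsto (fun N : ℕ ↦ (N, N, N)) atTop windows :=
  tendsto_inf.2 ⟨tendsto_id.prodMk (tendsto_id.prodMk tendsto_id),
    tendsto_principal.2 (.of_forall fun _ ↦ ⟨le_rfl, le_rfl⟩)⟩

instance : windows.NeBot := tendsto_diag_windows.neBot

instance : windows.IsCountablyGenerated := by
  unfold windows
  infer_instance

lemma tendsto_windows_fst : Tendsto (fun q : ℕ × ℕ × ℕ ↦ q.1) windows atTop :=
  tendsto_fst.mono_left inf_le_left

lemma tendsto_windows_snd_fst : Tendsto (fun q : ℕ × ℕ × ℕ ↦ q.2.1) windows atTop :=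
  (tendsto_fst.comp tendsto_snd).mono_left inf_le_left

lemma tendsto_windows_snd_snd : Tendsto (fun q : ℕ × ℕ × ℕ ↦ q.2.2) windows atTop :=
  (tendsto_snd.comp tendsto_snd).mono_left inf_le_left

end Windows

section CommutingPairs

lemma abs_indicator_one_le {Y : Type*} (E : Set Y) (y : Y) : |E.indicator (1 : Y → ℝ) y| ≤ 1 := by
  by_cases h : y ∈ E <;> simp [h]

variable {Y : Type*} [MeasurableSpace Y]

/-- Measurable functions bounded by one in absolute value, the normalisation used for the four
factors of the averages. -/
structure UnitBounded (f : Y → ℝ) : Prop where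
  measurable : Measurable f
  abs_le_one : ∀ y, |f y| ≤ 1

namespace UnitBounded

variable {f g : Y → ℝ} {ν : Measure Y}

lemma mul (hf : UnitBounded f) (hg : UnitBounded g) : UnitBounded fun y ↦ f y * g y :=
  ⟨hf.measurable.mul hg.measurable, fun y ↦ abs_mul_le_one (hf.abs_le_one y) (hg.abs_le_one y)⟩

lemma comp {Z : Type*} [MeasurableSpace Z] {π : Z → Y} (hf : UnitBounded f) (hπ : Measurable π) :
    UnitBounded fun z ↦ f (π z) :=
  ⟨hf.measurable.comp hπ, fun _ ↦ hf.abs_le_one _⟩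

lemma indicator_one {E : Set Y} (hE : MeasurableSet E) : UnitBounded (E.indicator 1) where
  measurable := measurable_one.indicator hE
  abs_le_one := abs_indicator_one_le E

lemma expect {u : ℕ → Y → ℝ} (hu : ∀ n, UnitBounded (u n)) (N : ℕ) :
    UnitBounded fun y ↦ 𝔼 n ∈ range N, u n y where
  measurable := measurable_expect _ fun n ↦ (hu n).measurable
  abs_le_one y := abs_expect_range_le zero_le_one (fun n ↦ (hu n).abs_le_one y) N

lemma expect_iterate {R : Y → Y} (hf : UnitBounded f) (hR : Measurable R) (N : ℕ) :
    UnitBounded fun y ↦ 𝔼 n ∈ range N, f (R^[n] y) :=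
  expect (fun n ↦ hf.comp (hR.iterate n)) N

lemma integrable [IsFiniteMeasure ν] (hf : UnitBounded f) : Integrable f ν :=
  integrable_of_abs_le hf.measurable hf.abs_le_one

end UnitBounded

/-- A pair of commuting measure-preserving transformations, not necessarily invertible. -/
structure CommutingPair (S T : Y → Y) (ν : Measure Y) : Prop where
  left : MeasurePreserving S ν ν
  right : MeasurePreserving T ν ν
  comm : Function.Commute S T

end CommutingPairs

section OrbitCubeAverages

/-- The average over `i, j < N`, `k < K` and `p < P`, where `q = (N, K, P)`, of
`f₀ (S^i T^j y) f₁ (S^(i+k) T^j y) f₂ (S^i T^(j+p) y) f₃ (S^(i+k) T^(j+p) y)`. -/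
noncomputable def orbitCubeAverage {Y : Type*} (S T : Y → Y) (f₀ f₁ f₂ f₃ : Y → ℝ)
    (q : ℕ × ℕ × ℕ) (y : Y) : ℝ :=
  cubeAverage (fun i j ↦ f₀ (S^[i] (T^[j] y))) (fun i j ↦ f₁ (S^[i] (T^[j] y)))
    (fun i j ↦ f₂ (S^[i] (T^[j] y))) (fun i j ↦ f₃ (S^[i] (T^[j] y))) q

variable {Y : Type*} {S T : Y → Y} {f₀ f₁ f₂ : Y → ℝ}

lemma orbitCubeAverage_add (f g : Y → ℝ) (q : ℕ × ℕ × ℕ) (y : Y) :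
    orbitCubeAverage S T f₀ f₁ f₂ (f + g) q y =
      orbitCubeAverage S T f₀ f₁ f₂ f q y + orbitCubeAverage S T f₀ f₁ f₂ g q y := by
  simp only [orbitCubeAverage, cubeAverage, Pi.add_apply, mul_add, Finset.expect_add_distrib]

lemma orbitCubeAverage_smul (c : ℝ) (f : Y → ℝ) (q : ℕ × ℕ × ℕ) (y : Y) :
    orbitCubeAverage S T f₀ f₁ f₂ (c • f) q y = c * orbitCubeAverage S T f₀ f₁ f₂ f q y := by
  simp only [orbitCubeAverage, cubeAverage, Pi.smul_apply, smul_eq_mul, mul_left_comm _ c,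
    Finset.mul_expect]

lemma orbitCubeAverage_sub (f g : Y → ℝ) (q : ℕ × ℕ × ℕ) (y : Y) :
    orbitCubeAverage S T f₀ f₁ f₂ (f - g) q y =
      orbitCubeAverage S T f₀ f₁ f₂ f q y - orbitCubeAverage S T f₀ f₁ f₂ g q y := by
  rw [eq_sub_iff_add_eq, ← orbitCubeAverage_add, sub_add_cancel]

lemma orbitCubeAverage_one (hcomm : Function.Commute S T) (N K P : ℕ) (y : Y) :
    orbitCubeAverage S T f₀ f₁ f₂ 1 (N, K, P) y =
      gridAverage S T (fun z ↦ f₀ z * ((𝔼 k ∈ range K, f₁ (S^[k] z)) *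
        𝔼 p ∈ range P, f₂ (T^[p] z))) N y := by
  refine Finset.expect_congr rfl fun i _ ↦ Finset.expect_congr rfl fun j _ ↦ ?_
  beta_reduce
  rw [Finset.expect_mul_expect, Finset.mul_expect]
  refine Finset.expect_congr rfl fun k _ ↦ ?_
  rw [Finset.mul_expect]
  refine Finset.expect_congr rfl fun p _ ↦ ?_
  rw [← Function.iterate_add_apply, ← (hcomm.iterate_iterate i p) (T^[j] y),
    ← Function.iterate_add_apply, add_comm k, add_comm p, Pi.one_apply]
  ring

variable [MeasurableSpace Y] {ν : Measure Y}

lemma measurable_orbitCubeAverage {f : Y → ℝ} (hS : Measurable S) (hT : Measurable T)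
    (h₀ : Measurable f₀) (h₁ : Measurable f₁) (h₂ : Measurable f₂) (hf : Measurable f)
    (q : ℕ × ℕ × ℕ) : Measurable (orbitCubeAverage S T f₀ f₁ f₂ f q) := by
  have hiter (i j : ℕ) : Measurable fun y ↦ S^[i] (T^[j] y) := (hS.iterate i).comp (hT.iterate j)
  exact measurable_expect _ fun i ↦ measurable_expect _ fun j ↦ measurable_expect _ fun k ↦
    measurable_expect _ fun p ↦ (((h₀.comp (hiter _ _)).mul (h₁.comp (hiter _ _))).mul
      (h₂.comp (hiter _ _))).mul (hf.comp (hiter _ _))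

end OrbitCubeAverages

section ConstantFactor

variable {Y : Type*} [MeasurableSpace Y] {ν : Measure Y}

/-- The oscillation beyond time `n` of the averages of `f` along the orbits of `R`. -/
noncomputable def ergodicTail (R : Y → Y) (f : Y → ℝ) (n : ℕ) : Y → ℝ :=
  tailSup (fun N y ↦ 𝔼 i ∈ range N, f (R^[i] y)) (fun y ↦ 𝔼 i ∈ range n, f (R^[i] y)) n

variable {R : Y → Y} {f : Y → ℝ}

lemma abs_expect_sub_le_ergodicTail (hR : Measurable R) (hf : UnitBounded f) {n N : ℕ} (hN : n ≤ N)
    (y : Y) :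
    |𝔼 i ∈ range N, f (R^[i] y) - 𝔼 i ∈ range n, f (R^[i] y)| ≤ ergodicTail R f n y :=
  abs_sub_le_tailSup (F := fun y ↦ 𝔼 i ∈ range n, f (R^[i] y))
    (fun N ↦ (hf.expect_iterate hR N).abs_le_one) hN y

lemma measurable_ergodicTail (hR : Measurable R) (hf : UnitBounded f) (n : ℕ) :
    Measurable (ergodicTail R f n) :=
  measurable_tailSup (fun N ↦ (hf.expect_iterate hR N).measurable)
    (hf.expect_iterate hR n).measurable n

lemma abs_ergodicTail_le (hR : Measurable R) (hf : UnitBounded f) (n : ℕ) (y : Y) :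
    |ergodicTail R f n y| ≤ 2 := by
  have hle := tailSup_le (F := fun y ↦ 𝔼 i ∈ range n, f (R^[i] y))
    (fun N y ↦ (hf.expect_iterate hR N).abs_le_one y) n y
  rw [ergodicTail, abs_of_nonneg (tailSup_nonneg _ _ _ _)]
  linarith [(hf.expect_iterate hR n).abs_le_one y]

lemma tendsto_integral_ergodicTail [IsFiniteMeasure ν] (hR : MeasurePreserving R ν ν)
    (hf : UnitBounded f) :
    Tendsto (fun n ↦ ∫ y, ergodicTail R f n y ∂ν) atTop (𝓝 0) := by
  set a : ℕ → Y → ℝ := fun N y ↦ 𝔼 i ∈ range N, f (R^[i] y)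
  set F := ν[f | invariants R]
  have ha N : UnitBounded (a N) := hf.expect_iterate hR.measurable N
  have hFm : Measurable F := stronglyMeasurable_condExp.measurable.mono (invariants_le R) le_rfl
  have hlim : Tendsto (fun n ↦ ∫ y, tailSup a F n y ∂ν) atTop (𝓝 0) :=
    tendsto_integral_tailSup (fun N ↦ (ha N).measurable) (fun N ↦ (ha N).abs_le_one)
      (integrable_const 1) hFm integrable_condExp <| by
        simpa only [birkhoffAverage_eq_expect] using
          ae_tendsto_birkhoffAverage hR hf.measurable hf.integrable
  refine squeeze_zero (fun n ↦ integral_nonneg fun y ↦ tailSup_nonneg _ _ n y) (fun n ↦ ?_)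
    (by simpa using hlim.const_mul 2)
  rw [← integral_const_mul]
  exact integral_mono (integrable_of_abs_le (measurable_ergodicTail hR.measurable hf n)
      (abs_ergodicTail_le hR.measurable hf n))
    ((integrable_tailSup (fun N ↦ (ha N).measurable) (fun N ↦ (ha N).abs_le_one)
      (integrable_const 1) hFm integrable_condExp n).const_mul 2)
    fun y ↦ tailSup_self_le (fun N ↦ (ha N).abs_le_one) F n y

variable {S T : Y → Y} {f₀ f₁ f₂ : Y → ℝ}

lemma abs_orbitCubeAverage_one_sub_le (h : CommutingPair S T ν) (h₀ : UnitBounded f₀)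
    (h₁ : UnitBounded f₁) (h₂ : UnitBounded f₂) {n K P : ℕ} (hK : n ≤ K) (hP : n ≤ P) (N : ℕ)
    (y : Y) :
    |orbitCubeAverage S T f₀ f₁ f₂ 1 (N, K, P) y - gridAverage S T (fun z ↦ f₀ z *
        ((𝔼 k ∈ range n, f₁ (S^[k] z)) * 𝔼 p ∈ range n, f₂ (T^[p] z))) N y| ≤
      gridAverage S T (ergodicTail S f₁ n + ergodicTail T f₂ n) N y := by
  rw [orbitCubeAverage_one h.comm]
  refine abs_gridAverage_sub_le (fun z ↦ ?_) N y
  have hS := abs_expect_sub_le_ergodicTail h.left.measurable h₁ hK z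
  have hT := abs_expect_sub_le_ergodicTail h.right.measurable h₂ hP z
  have ha := (h₁.expect_iterate h.left.measurable n).abs_le_one z
  have hb := (h₂.expect_iterate h.right.measurable P).abs_le_one z
  set a := 𝔼 k ∈ range n, f₁ (S^[k] z)
  set b := 𝔼 p ∈ range P, f₂ (T^[p] z)
  set a' := 𝔼 k ∈ range K, f₁ (S^[k] z)
  set b' := 𝔼 p ∈ range n, f₂ (T^[p] z)
  calc |f₀ z * (a' * b) - f₀ z * (a * b')|
      = |f₀ z| * |(a' - a) * b + a * (b - b')| := by rw [← abs_mul]; congr 1; ring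
    _ ≤ 1 * (|a' - a| * 1 + 1 * |b - b'|) := by
        gcongr
        · exact h₀.abs_le_one z
        · refine (abs_add_le _ _).trans ?_
          rw [abs_mul, abs_mul]
          gcongr
    _ ≤ _ := by simpa using add_le_add hS hT

variable [IsProbabilityMeasure ν]

lemma lintegral_osc_gridAverage {φ : Y → ℝ} (h : CommutingPair S T ν) (hφ : UnitBounded φ) :
    ∫⁻ y, osc windows (fun q ↦ gridAverage S T φ q.1 y) ∂ν = 0 := by
  refine (lintegral_osc_eq_zero_iff (l := windows) (A := fun q ↦ gridAverage S T φ q.1)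
    fun q ↦ measurable_gridAverage h.left.measurable h.right.measurable hφ.measurable q.1).2 ?_
  filter_upwards [ae_tendsto_gridAverage h.left h.right hφ.measurable hφ.abs_le_one] with y hy
  exact ⟨_, hy.comp tendsto_windows_fst⟩

lemma lintegral_osc_orbitCubeAverage_one_le (h : CommutingPair S T ν) (h₀ : UnitBounded f₀)
    (h₁ : UnitBounded f₁) (h₂ : UnitBounded f₂) (n : ℕ) :
    ∫⁻ y, osc windows (orbitCubeAverage S T f₀ f₁ f₂ 1 · y) ∂ν ≤
      ENNReal.ofReal (2 * (0 + (∫ y, ergodicTail S f₁ n y ∂ν + ∫ y, ergodicTail T f₂ n y ∂ν))) := by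
  have hS := h.left.measurable
  have hT := h.right.measurable
  set φ : Y → ℝ := fun z ↦ f₀ z * ((𝔼 k ∈ range n, f₁ (S^[k] z)) * 𝔼 p ∈ range n, f₂ (T^[p] z))
  have hφ : UnitBounded φ := h₀.mul ((h₁.expect_iterate hS n).mul (h₂.expect_iterate hT n))
  have hgrid := lintegral_osc_gridAverage h hφ
  have hmS := measurable_ergodicTail hS h₁ n
  have hmT := measurable_ergodicTail hT h₂ n
  have hbS := abs_ergodicTail_le hS h₁ n
  have hbT := abs_ergodicTail_le hT h₂ n
  have hle := lintegral_osc_le (A := orbitCubeAverage S T f₀ f₁ f₂ 1)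
    (B := fun q ↦ gridAverage S T φ q.1) (N := Prod.fst) (d := 0) (δ := 0) (l := windows)
    (g := ergodicTail S f₁ n + ergodicTail T f₂ n) h.left h.right tendsto_windows_fst
    tendsto_const_nhds (hmS.add hmT)
    (fun y ↦ (abs_add_le _ _).trans (add_le_add (hbS y) (hbT y))) (.of_forall fun y ↦ by
      filter_upwards [tendsto_windows_snd_fst.eventually_ge_atTop n,
        tendsto_windows_snd_snd.eventually_ge_atTop n] with ⟨N, K, P⟩ hK hP
      simpa using abs_orbitCubeAverage_one_sub_le h h₀ h₁ h₂ hK hP N y)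
  rwa [hgrid, zero_add, integral_add' (integrable_of_abs_le hmS hbS)
    (integrable_of_abs_le hmT hbT)] at hle

theorem ae_exists_tendsto_orbitCubeAverage_one (h : CommutingPair S T ν) (h₀ : UnitBounded f₀)
    (h₁ : UnitBounded f₁) (h₂ : UnitBounded f₂) :
    ∀ᵐ y ∂ν, ∃ c, Tendsto (orbitCubeAverage S T f₀ f₁ f₂ 1 · y) windows (𝓝 c) := by
  rw [← lintegral_osc_eq_zero_iff fun q ↦ measurable_orbitCubeAverage h.left.measurable
    h.right.measurable h₀.measurable h₁.measurable h₂.measurable measurable_one q]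
  have hlim := ENNReal.tendsto_ofReal <| (((tendsto_integral_ergodicTail h.left h₁).add
    (tendsto_integral_ergodicTail h.right h₂)).const_add 0).const_mul 2
  exact le_antisymm (ge_of_tendsto' (by simpa using hlim) fun n ↦ by
    simpa using lintegral_osc_orbitCubeAverage_one_le h h₀ h₁ h₂ n) zero_le

end ConstantFactor

section StructuredFactor

variable {Y : Type*} [MeasurableSpace Y] {ν : Measure Y} {S T : Y → Y} {f₀ f₁ f₂ f g : Y → ℝ}

/-- The bounded measurable functions `f` which, as last factor, make the averages converge almost
everywhere along `windows`. -/
def convergentFactors (ν : Measure Y) (S T : Y → Y) (f₀ f₁ f₂ : Y → ℝ) : Submodule ℝ (Y → ℝ) where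
  carrier := {f | Measurable f ∧ (∃ C, ∀ y, |f y| ≤ C) ∧
    ∀ᵐ y ∂ν, ∃ c, Tendsto (orbitCubeAverage S T f₀ f₁ f₂ f · y) windows (𝓝 c)}
  zero_mem' := ⟨measurable_zero, ⟨0, by simp⟩, .of_forall fun y ↦ ⟨0, by
    simp [orbitCubeAverage, cubeAverage]⟩⟩
  add_mem' := by
    rintro f g ⟨hf, ⟨C, hC⟩, hfl⟩ ⟨hg, ⟨D, hD⟩, hgl⟩
    refine ⟨hf.add hg, ⟨C + D, fun y ↦ (abs_add_le _ _).trans (add_le_add (hC y) (hD y))⟩, ?_⟩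
    filter_upwards [hfl, hgl] with y ⟨c, hc⟩ ⟨d, hd⟩
    exact ⟨c + d, by simpa only [orbitCubeAverage_add] using hc.add hd⟩
  smul_mem' := by
    rintro a f ⟨hf, ⟨C, hC⟩, hfl⟩
    refine ⟨hf.const_smul a, ⟨|a| * C, fun y ↦ ?_⟩, ?_⟩
    · rw [Pi.smul_apply, smul_eq_mul, abs_mul]
      exact mul_le_mul_of_nonneg_left (hC y) (abs_nonneg a)
    · filter_upwards [hfl] with y ⟨c, hc⟩
      exact ⟨a * c, by simpa only [orbitCubeAverage_smul] using hc.const_mul a⟩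

lemma indicator_inter_mem_convergentFactors [IsProbabilityMeasure ν] (h : CommutingPair S T ν)
    (h₀ : UnitBounded f₀) (h₁ : UnitBounded f₁) (h₂ : UnitBounded f₂) {A B : Set Y}
    (hA : MeasurableSet[invariants S] A) (hB : MeasurableSet[invariants T] B) :
    (A ∩ B).indicator 1 ∈ convergentFactors ν S T f₀ f₁ f₂ := by
  have hAB := UnitBounded.indicator_one (hA.1.inter hB.1)
  refine ⟨hAB.measurable, ⟨1, hAB.abs_le_one⟩, ?_⟩
  filter_upwards [ae_exists_tendsto_orbitCubeAverage_one h h₀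
    (h₁.mul (.indicator_one hB.1)) (h₂.mul (.indicator_one hA.1))] with y ⟨c, hc⟩
  refine ⟨c, hc.congr fun q ↦ ?_⟩
  refine Finset.expect_congr rfl fun i _ ↦ Finset.expect_congr rfl fun j _ ↦
    Finset.expect_congr rfl fun k _ ↦ Finset.expect_congr rfl fun p _ ↦ ?_
  have hinv {E : Set Y} {R : Y → Y} (hE : R ⁻¹' E = E) (n : ℕ) (z : Y) :
      E.indicator (1 : Y → ℝ) (R^[n] z) = E.indicator 1 z := by
    have hn : R^[n] z ∈ E ↔ z ∈ E := by
      rw [← Set.mem_preimage, Set.preimage_iterate_eq, Function.iterate_fixed hE]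
    by_cases hz : z ∈ E
    · rw [Set.indicator_of_mem hz, Set.indicator_of_mem (hn.2 hz), Pi.one_apply, Pi.one_apply]
    · rw [Set.indicator_of_notMem hz, Set.indicator_of_notMem (hn.not.2 hz)]
  have hAk : A.indicator (1 : Y → ℝ) (S^[i + k] (T^[j + p] y)) =
      A.indicator 1 (S^[i] (T^[j + p] y)) := by
    rw [add_comm, Function.iterate_add_apply, hinv hA.2]
  have hBp : B.indicator (1 : Y → ℝ) (S^[i + k] (T^[j + p] y)) =
      B.indicator 1 (S^[i + k] (T^[j] y)) := by
    rw [add_comm j, Function.iterate_add_apply T, (h.comm.iterate_iterate (i + k) p) (T^[j] y),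
      hinv hB.2]
  have hprod : (A ∩ B).indicator (1 : Y → ℝ) (S^[i + k] (T^[j + p] y)) =
      A.indicator 1 (S^[i] (T^[j + p] y)) * B.indicator 1 (S^[i + k] (T^[j] y)) := by
    rw [Set.inter_indicator_one, Pi.mul_apply, hAk, hBp]
  beta_reduce
  rw [hprod, Pi.one_apply]
  ring

lemma generateFrom_invariants_inter (S T : Y → Y) :
    MeasurableSpace.generateFrom {E | ∃ A B, MeasurableSet[invariants S] A ∧
      MeasurableSet[invariants T] B ∧ A ∩ B = E} = invariants S ⊔ invariants T := by
  refine le_antisymm (MeasurableSpace.generateFrom_le ?_) (sup_le (fun A hA ↦ ?_) fun B hB ↦ ?_)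
  · rintro E ⟨A, B, hA, hB, rfl⟩
    exact (le_sup_left (a := invariants S) _ hA).inter (le_sup_right (b := invariants T) _ hB)
  · exact MeasurableSpace.measurableSet_generateFrom ⟨A, .univ, hA, .univ, Set.inter_univ A⟩
  · exact MeasurableSpace.measurableSet_generateFrom ⟨.univ, B, .univ, hB, Set.univ_inter B⟩

variable [IsProbabilityMeasure ν]

lemma lintegral_osc_orbitCubeAverage_le_add (h : CommutingPair S T ν) (h₀ : UnitBounded f₀)
    (h₁ : UnitBounded f₁) (h₂ : UnitBounded f₂) (hf : Measurable f) (hg : Measurable g) {C : ℝ}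
    (hC : ∀ y, |f y - g y| ≤ C) :
    ∫⁻ y, osc windows (orbitCubeAverage S T f₀ f₁ f₂ f · y) ∂ν ≤
      ∫⁻ y, osc windows (orbitCubeAverage S T f₀ f₁ f₂ g · y) ∂ν +
        ENNReal.ofReal (8 * ∫ y, |f y - g y| ∂ν) := by
  have hle := lintegral_osc_le (A := orbitCubeAverage S T f₀ f₁ f₂ f)
    (B := orbitCubeAverage S T f₀ f₁ f₂ g) (N := fun q ↦ 2 * q.1) (d := 0) (δ := 0) (l := windows)
    (g := fun y ↦ 4 * |f y - g y|) (C := 4 * C) h.left h.right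
    (tendsto_windows_fst.const_mul_atTop' two_pos) tendsto_const_nhds ((hf.sub hg).abs.const_mul 4)
    (fun y ↦ by rw [abs_mul, abs_abs, abs_of_pos four_pos]; gcongr; exact hC y) <|
    .of_forall fun y ↦ by
      filter_upwards [eventually_windows_le] with ⟨N, K, P⟩ ⟨hK, hP⟩
      rw [← orbitCubeAverage_sub]
      refine (abs_cubeAverage_le (fun _ _ ↦ h₀.abs_le_one _) (fun _ _ ↦ h₁.abs_le_one _)
        (fun _ _ ↦ h₂.abs_le_one _) hK hP).trans_eq ?_
      simp [gridAverage, Finset.mul_expect]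
  convert hle using 3
  rw [integral_const_mul]
  ring

lemma mem_convergentFactors_of_tendsto (h : CommutingPair S T ν) (h₀ : UnitBounded f₀)
    (h₁ : UnitBounded f₁) (h₂ : UnitBounded f₂) {u : ℕ → Y → ℝ} {C : ℝ}
    (hu : ∀ n, u n ∈ convergentFactors ν S T f₀ f₁ f₂) (hC : ∀ n y, |u n y| ≤ C)
    (hlim : ∀ y, Tendsto (u · y) atTop (𝓝 (f y))) : f ∈ convergentFactors ν S T f₀ f₁ f₂ := by
  have hf : Measurable f := measurable_of_tendsto_metrizable (fun n ↦ (hu n).1)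
    (tendsto_pi_nhds.2 hlim)
  have hfC (y : Y) : |f y| ≤ C := le_of_tendsto' (hlim y).abs (hC · y)
  have hbound (n : ℕ) (y : Y) : |f y - u n y| ≤ C + C :=
    (abs_sub _ _).trans (add_le_add (hfC y) (hC n y))
  have hmeas {g : Y → ℝ} (hg : Measurable g) (q : ℕ × ℕ × ℕ) :=
    measurable_orbitCubeAverage h.left.measurable h.right.measurable h₀.measurable h₁.measurable
      h₂.measurable hg q
  have hL1 : Tendsto (fun n ↦ ∫ y, |f y - u n y| ∂ν) atTop (𝓝 0) := by
    rw [← integral_zero Y ℝ (μ := ν)]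
    refine tendsto_integral_of_dominated_convergence (fun _ ↦ C + C)
      (fun n ↦ (hf.sub (hu n).1).abs.aestronglyMeasurable) (integrable_const _)
      (fun n ↦ .of_forall fun y ↦ by simpa using hbound n y) (.of_forall fun y ↦ ?_)
    simpa using ((hlim y).const_sub (f y)).abs
  refine ⟨hf, ⟨C, hfC⟩, (lintegral_osc_eq_zero_iff (hmeas hf)).1 <| le_antisymm ?_ zero_le⟩
  have hlim₀ := ENNReal.tendsto_ofReal (hL1.const_mul 8)
  rw [mul_zero, ENNReal.ofReal_zero] at hlim₀
  refine ge_of_tendsto' hlim₀ fun n ↦ ?_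
  have hn := (lintegral_osc_eq_zero_iff (hmeas (hu n).1)).2 (hu n).2.2
  simpa only [hn, zero_add] using
    lintegral_osc_orbitCubeAverage_le_add h h₀ h₁ h₂ hf (hu n).1 (hbound n)

lemma indicator_mem_convergentFactors (h : CommutingPair S T ν) (h₀ : UnitBounded f₀)
    (h₁ : UnitBounded f₁) (h₂ : UnitBounded f₂) {E : Set Y}
    (hE : MeasurableSet[invariants S ⊔ invariants T] E) :
    E.indicator 1 ∈ convergentFactors ν S T f₀ f₁ f₂ := by
  have hone : 1 ∈ convergentFactors ν S T f₀ f₁ f₂ := by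
    simpa using indicator_inter_mem_convergentFactors h h₀ h₁ h₂ (A := .univ) (B := .univ)
      .univ .univ
  induction E, hE using MeasurableSpace.induction_on_inter
    (generateFrom_invariants_inter S T).symm with
  | h_inter =>
    rintro _ ⟨A, B, hA, hB, rfl⟩ _ ⟨A', B', hA', hB', rfl⟩ -
    exact ⟨A ∩ A', B ∩ B', hA.inter hA', hB.inter hB', Set.inter_inter_inter_comm _ _ _ _⟩
  | empty =>
    rw [Set.indicator_empty']
    exact zero_mem _
  | basic t ht =>
    obtain ⟨A, B, hA, hB, rfl⟩ := ht
    exact indicator_inter_mem_convergentFactors h h₀ h₁ h₂ hA hB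
  | compl t _ ih =>
    rw [Set.indicator_compl]
    exact sub_mem hone ih
  | iUnion t hd _ ih =>
    refine mem_convergentFactors_of_tendsto h h₀ h₁ h₂ (C := 1)
      (u := fun n ↦ (⋃ i ∈ range n, t i).indicator 1) (fun n ↦ ?_) (fun n y ↦ ?_) fun y ↦ ?_
    · rw [Finset.indicator_biUnion _ _ fun i _ j _ hij ↦ hd hij]
      simpa [Finset.sum_fn] using sum_mem fun i (_ : i ∈ range n) ↦ ih i
    · exact abs_indicator_one_le _ y
    · exact ((tendsto_indicator_biUnion_finset t 1 y).mono_right (pure_le_nhds _)).comp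
        tendsto_finset_range

/- An indicator `1_A 1_B` with `A` invariant under `S` and `B` under `T` can be absorbed into the
factors `f₂` and `f₁`, which leaves a constant last factor. -/
theorem ae_exists_tendsto_orbitCubeAverage_of_measurable (h : CommutingPair S T ν)
    (h₀ : UnitBounded f₀) (h₁ : UnitBounded f₁) (h₂ : UnitBounded f₂)
    (hf : Measurable[invariants S ⊔ invariants T] f) (hf₁ : ∀ y, |f y| ≤ 1) :
    ∀ᵐ y ∂ν, ∃ c, Tendsto (orbitCubeAverage S T f₀ f₁ f₂ f · y) windows (𝓝 c) := by
  have hsm : StronglyMeasurable[invariants S ⊔ invariants T] f := hf.stronglyMeasurable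
  have hsimple (φ : @SimpleFunc Y (invariants S ⊔ invariants T) ℝ) :
      ⇑φ ∈ convergentFactors ν S T f₀ f₁ f₂ := by
    induction φ using SimpleFunc.induction with
    | @const c s hs =>
      convert (convergentFactors ν S T f₀ f₁ f₂).smul_mem c
        (indicator_mem_convergentFactors h h₀ h₁ h₂ hs) using 1
      ext y
      by_cases hy : y ∈ s <;> simp [hy]
    | add _ hf hg => exact add_mem hf hg
  exact (mem_convergentFactors_of_tendsto h h₀ h₁ h₂ (fun n ↦ hsimple (hsm.approxBounded 1 n))
    (fun n y ↦ hsm.norm_approxBounded_le zero_le_one n y)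
    fun y ↦ hsm.tendsto_approxBounded_of_norm_le (hf₁ y)).2.2

end StructuredFactor

section Joining

variable {Y : Type*} [MeasurableSpace Y] {ν : Measure Y}

lemma integral_expect {ι : Type*} (s : Finset ι) {u : ι → Y → ℝ}
    (hu : ∀ i ∈ s, Integrable (u i) ν) : ∫ y, 𝔼 i ∈ s, u i y ∂ν = 𝔼 i ∈ s, ∫ y, u i y ∂ν := by
  simp only [Finset.expect_eq_sum_div_card]
  rw [integral_div, integral_finsetSum _ hu]

lemma tendsto_expect {α ι : Type*} {l : Filter α} (s : Finset ι) {u : α → ι → ℝ} {a : ι → ℝ}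
    (h : ∀ i ∈ s, Tendsto (u · i) l (𝓝 (a i))) :
    Tendsto (fun x ↦ 𝔼 i ∈ s, u x i) l (𝓝 (𝔼 i ∈ s, a i)) := by
  simpa only [Finset.expect_eq_sum_div_card] using (tendsto_finsetSum _ h).div_const _

lemma condExp_invariants_comp_self [IsFiniteMeasure ν] {S : Y → Y} {f : Y → ℝ}
    (hS : MeasurePreserving S ν ν) (hf : Measurable f) (hfi : Integrable f ν) :
    ν[f ∘ S | invariants S] =ᵐ[ν] ν[f | invariants S] := by
  filter_upwards [condExp_invariants_comp_of_commute hS hS (.refl S) hf hfi] with y hy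
  rw [hy, MeasurableSpace.comp_eq_of_measurable_invariants stronglyMeasurable_condExp.measurable]

variable {S T : Y → Y} {ν₂ : Measure (Y × Y)}

variable (ν S) in
theorem exists_isRelIndJoining [StandardBorelSpace Y] [IsProbabilityMeasure ν] :
    ∃ ν₂ : Measure (Y × Y), IsRelIndJoining ν S ν₂ := by
  let κ : ProbabilityTheory.Kernel Y Y :=
    (ProbabilityTheory.condExpKernel ν (invariants S)).comap id (measurable_id'' (invariants_le S))
  have : ProbabilityTheory.IsMarkovKernel κ := inferInstance
  have hcond {f : Y → ℝ} (hf : Integrable f ν) :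
      ν[f | invariants S] =ᵐ[ν] fun y ↦ ∫ z, f z ∂(κ y) :=
    ProbabilityTheory.condExp_ae_eq_integral_condExpKernel (invariants_le S) hf
  refine ⟨(ν.compProd (κ.prod κ)).map Prod.snd, ?_⟩
  rintro f₀ f₁ hf₀ hf₁ ⟨C₀, hC₀⟩ ⟨C₁, hC₁⟩
  have hm : Measurable fun p : Y × Y ↦ f₀ p.1 * f₁ p.2 :=
    (hf₀.comp measurable_fst).mul (hf₁.comp measurable_snd)
  rw [integral_map measurable_snd.aemeasurable hm.aestronglyMeasurable, Measure.integral_compProd]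
  · refine integral_congr_ae ?_
    filter_upwards [hcond (integrable_of_abs_le hf₀ hC₀), hcond (integrable_of_abs_le hf₁ hC₁)]
      with y h₀ h₁
    rw [invSigma_eq_invariants, h₀, h₁, ProbabilityTheory.Kernel.prod_apply]
    exact integral_prod_mul f₀ f₁
  · refine integrable_of_abs_le (hm.comp measurable_snd) (C := C₀ * C₁) fun y ↦ ?_
    rw [abs_mul]
    exact mul_le_mul (hC₀ _) (hC₁ _) (abs_nonneg _) ((abs_nonneg _).trans (hC₀ y.2.1))

namespace IsRelIndJoining

lemma integral_mul (h : IsRelIndJoining ν S ν₂) {f g : Y → ℝ} (hf : UnitBounded f)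
    (hg : UnitBounded g) : ∫ p, f p.1 * g p.2 ∂ν₂ =
      ∫ y, (ν[f | invariants S]) y * (ν[g | invariants S]) y ∂ν :=
  h f g hf.measurable hg.measurable ⟨1, hf.abs_le_one⟩ ⟨1, hg.abs_le_one⟩

lemma measureReal_prod (h : IsRelIndJoining ν S ν₂) {A B : Set Y} (hA : MeasurableSet A)
    (hB : MeasurableSet B) : ν₂.real (A ×ˢ B) =
      ∫ y, (ν[A.indicator 1 | invariants S]) y * (ν[B.indicator 1 | invariants S]) y ∂ν := by
  rw [← h.integral_mul (.indicator_one hA) (.indicator_one hB),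
    ← integral_indicator_one (hA.prod hB)]
  exact integral_congr_ae <| .of_forall fun p ↦ Set.indicator_prod_one

variable [IsProbabilityMeasure ν]

lemma isProbabilityMeasure (h : IsRelIndJoining ν S ν₂) : IsProbabilityMeasure ν₂ := by
  have hone := h.integral_mul (f := fun _ ↦ 1) (g := fun _ ↦ 1)
    ⟨measurable_const, by simp⟩ ⟨measurable_const, by simp⟩
  rw [condExp_const (invariants_le S)] at hone
  simp only [mul_one, integral_const, smul_eq_mul, probReal_univ] at hone
  rw [measureReal_def, ENNReal.toReal_eq_one_iff] at hone
  exact ⟨hone⟩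

lemma measurePreserving_snd (h : IsRelIndJoining ν S ν₂) : MeasurePreserving Prod.snd ν₂ ν := by
  have := h.isProbabilityMeasure
  refine ⟨measurable_snd, Measure.ext fun A hA ↦ ?_⟩
  have hreal := h.measureReal_prod .univ hA
  rw [Set.univ_prod, Set.indicator_univ, Pi.one_def, condExp_const (invariants_le S)] at hreal
  simp only [one_mul] at hreal
  rw [integral_condExp (invariants_le S), ← Pi.one_def, integral_indicator_one hA] at hreal
  rwa [Measure.map_apply measurable_snd hA, ← measureReal_eq_measureReal_iff]

lemma measurePreserving_prodMap (h : IsRelIndJoining ν S ν₂) {a b : Y → Y} (ha : Measurable a)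
    (hb : Measurable b) (hab : ∀ A B : Set Y, MeasurableSet A → MeasurableSet B →
      ν₂.real ((a ⁻¹' A) ×ˢ (b ⁻¹' B)) = ν₂.real (A ×ˢ B)) :
    MeasurePreserving (Prod.map a b) ν₂ ν₂ := by
  have := h.isProbabilityMeasure
  refine ⟨ha.prodMap hb, Measure.ext_prod fun {A B} hA hB ↦ ?_⟩
  rw [Measure.map_apply (ha.prodMap hb) (hA.prod hB), ← measureReal_eq_measureReal_iff]
  exact hab A B hA hB

lemma measurePreserving_id_prodMap (h : IsRelIndJoining ν S ν₂) (hS : MeasurePreserving S ν ν) :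
    MeasurePreserving (Prod.map id S) ν₂ ν₂ := by
  refine h.measurePreserving_prodMap measurable_id hS.measurable fun A B hA hB ↦ ?_
  rw [h.measureReal_prod hA hB, h.measureReal_prod (measurable_id hA) (hS.measurable hB)]
  have hi := UnitBounded.indicator_one hB
  refine integral_congr_ae ?_
  filter_upwards [condExp_invariants_comp_self hS hi.measurable hi.integrable] with y hy
  rw [← hy]
  rfl

lemma measurePreserving_prodMap_self (h : IsRelIndJoining ν S ν₂) (hST : CommutingPair S T ν) :
    MeasurePreserving (Prod.map T T) ν₂ ν₂ := by
  have hT := hST.right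
  refine h.measurePreserving_prodMap hT.measurable hT.measurable fun A B hA hB ↦ ?_
  have hcomp {E : Set Y} (hE : MeasurableSet E) :
      ν[(T ⁻¹' E).indicator 1 | invariants S] =ᵐ[ν] ν[E.indicator 1 | invariants S] ∘ T :=
    condExp_invariants_comp_of_commute hST.left hT hST.comm
      (UnitBounded.indicator_one hE).measurable (UnitBounded.indicator_one hE).integrable
  have hm (f : Y → ℝ) : Measurable (ν[f | invariants S]) :=
    stronglyMeasurable_condExp.measurable.mono (invariants_le S) le_rfl
  rw [h.measureReal_prod hA hB, h.measureReal_prod (hT.measurable hA) (hT.measurable hB),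
    ← integral_comp_eq_of_measurePreserving hT (f := fun y ↦ (ν[A.indicator 1 | invariants S]) y *
      (ν[B.indicator 1 | invariants S]) y) ((hm _).mul (hm _)).aestronglyMeasurable]
  refine integral_congr_ae ?_
  filter_upwards [hcomp hA, hcomp hB] with y hyA hyB
  rw [hyA, hyB]
  rfl

lemma commutingPair (h : IsRelIndJoining ν S ν₂) (hST : CommutingPair S T ν) :
    CommutingPair (Prod.map id S) (Prod.map T T) ν₂ where
  left := h.measurePreserving_id_prodMap hST.left
  right := h.measurePreserving_prodMap_self hST
  comm p := Prod.ext rfl (hST.comm p.2)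

/- Expanding the square on the right gives `r (T^i x₀) r (T^j x₀) r (T^i x₁) r (T^j x₁)`, a product
of the same function of `x₀` and of `x₁`. -/
lemma expect_integral_sq_condExp (h : IsRelIndJoining ν S ν₂) (hT : Measurable T) {r : Y → ℝ}
    (hr : UnitBounded r) (H : ℕ) :
    𝔼 i ∈ range H, 𝔼 j ∈ range H,
        ∫ y, ((ν[fun y ↦ r (T^[i] y) * r (T^[j] y) | invariants S]) y) ^ 2 ∂ν =
      ∫ p : Y × Y, (𝔼 i ∈ range H, r (T^[i] p.1) * r (T^[i] p.2)) ^ 2 ∂ν₂ := by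
  have := h.isProbabilityMeasure
  have hri (i : ℕ) : UnitBounded fun y ↦ r (T^[i] y) := hr.comp (hT.iterate i)
  have hrr (i : ℕ) : UnitBounded fun p : Y × Y ↦ r (T^[i] p.1) * r (T^[i] p.2) :=
    ((hri i).comp measurable_fst).mul ((hri i).comp measurable_snd)
  have hmul (i j : ℕ) := (hrr i).mul (hrr j)
  simp only [sq (𝔼 _ ∈ range H, _), Finset.expect_mul_expect]
  rw [integral_expect _ fun i _ ↦ (UnitBounded.expect (hmul i) H).integrable]
  refine Finset.expect_congr rfl fun i _ ↦ ?_
  rw [integral_expect _ fun j _ ↦ (hmul i j).integrable]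
  refine Finset.expect_congr rfl fun j _ ↦ ?_
  simp only [sq]
  rw [← h.integral_mul ((hri i).mul (hri j)) ((hri i).mul (hri j))]
  refine integral_congr_ae (.of_forall fun p ↦ ?_)
  ring

end IsRelIndJoining

end Joining

section UncorrelatedFactor

/-- The averaged correlation bounding the averages with last factor `r`: squares of averages over
`S^l`, `l < L`, of `r ∘ T^h * r ∘ T^h'`, averaged over `h, h' < H`. -/
noncomputable def shiftCorrelation {Y : Type*} (S T : Y → Y) (r : Y → ℝ) (H L : ℕ) (y : Y) : ℝ :=
  𝔼 h ∈ range H, 𝔼 h' ∈ range H, (𝔼 l ∈ range L, r (T^[h] (S^[l] y)) * r (T^[h'] (S^[l] y))) ^ 2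

variable {Y : Type*} {S T : Y → Y} {f₀ f₁ f₂ r : Y → ℝ}

lemma expect_sq_expect_eq_gridAverage_shiftCorrelation (hcomm : Function.Commute S T)
    (H L N : ℕ) (y : Y) :
    𝔼 h ∈ range H, 𝔼 h' ∈ range H, 𝔼 i ∈ range N, 𝔼 m ∈ range N,
        (𝔼 l ∈ range L, r (S^[i + l] (T^[m + h] y)) * r (S^[i + l] (T^[m + h'] y))) ^ 2 =
      gridAverage S T (shiftCorrelation S T r H L) N y := by
  have hiter (i l m h : ℕ) : S^[i + l] (T^[m + h] y) = T^[h] (S^[l] (S^[i] (T^[m] y))) := by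
    rw [← Function.iterate_add_apply S, ← (hcomm.iterate_iterate (l + i) h) (T^[m] y),
      ← Function.iterate_add_apply T, add_comm i, add_comm m]
  simp only [hiter, gridAverage, shiftCorrelation]
  simp only [Finset.expect_comm (range H) (range N)]

variable [MeasurableSpace Y] {ν : Measure Y}

lemma unitBounded_shiftCorrelation (hr : UnitBounded r) (hS : Measurable S) (hT : Measurable T)
    (H L : ℕ) : UnitBounded (shiftCorrelation S T r H L) := by
  have hri (i l : ℕ) : UnitBounded fun y ↦ r (T^[i] (S^[l] y)) :=
    hr.comp ((hT.iterate i).comp (hS.iterate l))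
  unfold shiftCorrelation
  simp only [sq]
  exact .expect (fun h ↦ .expect (fun h' ↦ .mul (.expect (fun l ↦ (hri h l).mul (hri h' l)) L)
    (.expect (fun l ↦ (hri h l).mul (hri h' l)) L)) H) H

lemma orbitCubeAverage_pow_four_le (h : CommutingPair S T ν) (h₀ : UnitBounded f₀)
    (h₁ : UnitBounded f₁) (h₂ : UnitBounded f₂) (hr : UnitBounded r) {N K P H L : ℕ} (hK : K ≤ N)
    (hP : P ≤ N) (hH : 0 < H) (hL : 0 < L) (y : Y) :
    orbitCubeAverage S T f₀ f₁ f₂ r (N, K, P) y ^ 4 ≤ 128 * ((H : ℝ) / P) ^ 4 +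
      256 * ((L : ℝ) / K) ^ 2 + 128 * gridAverage S T (shiftCorrelation S T r H L) (2 * N) y := by
  rw [← expect_sq_expect_eq_gridAverage_shiftCorrelation h.comm]
  exact cubeAverage_pow_four_le (fun _ _ ↦ h₀.abs_le_one _) (fun _ _ ↦ h₁.abs_le_one _)
    (fun _ _ ↦ h₂.abs_le_one _) (fun _ _ ↦ hr.abs_le_one _) hK hP hH hL

variable [IsProbabilityMeasure ν] {ν₂ : Measure (Y × Y)}

lemma tendsto_integral_shiftCorrelation (h : CommutingPair S T ν) (hr : UnitBounded r) (H : ℕ) :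
    Tendsto (fun L ↦ ∫ y, shiftCorrelation S T r H L y ∂ν) atTop
      (𝓝 (𝔼 i ∈ range H, 𝔼 j ∈ range H,
        ∫ y, ((ν[fun y ↦ r (T^[i] y) * r (T^[j] y) | invariants S]) y) ^ 2 ∂ν)) := by
  have hS := h.left.measurable
  have hrr (i j : ℕ) : UnitBounded fun y ↦ r (T^[i] y) * r (T^[j] y) :=
    (hr.comp (h.right.measurable.iterate i)).mul (hr.comp (h.right.measurable.iterate j))
  have hsq (i j L : ℕ) :
      UnitBounded fun y ↦ (𝔼 l ∈ range L, r (T^[i] (S^[l] y)) * r (T^[j] (S^[l] y))) ^ 2 := by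
    simp only [sq]
    exact ((hrr i j).expect_iterate hS L).mul ((hrr i j).expect_iterate hS L)
  have hint (L : ℕ) : ∫ y, shiftCorrelation S T r H L y ∂ν = 𝔼 i ∈ range H, 𝔼 j ∈ range H,
      ∫ y, (𝔼 l ∈ range L, r (T^[i] (S^[l] y)) * r (T^[j] (S^[l] y))) ^ 2 ∂ν := by
    simp only [shiftCorrelation]
    rw [integral_expect _ fun i _ ↦ (UnitBounded.expect (hsq i · L) H).integrable]
    exact Finset.expect_congr rfl fun i _ ↦ integral_expect _ fun j _ ↦ (hsq i j L).integrable
  have hlim (i j : ℕ) :=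
    tendsto_integral_sq_expect h.left (hrr i j).measurable (hrr i j).abs_le_one
  simp only [hint]
  refine tendsto_expect (range H) fun i _ ↦ tendsto_expect (range H) fun j _ ↦ ?_
  exact hlim i j

lemma exists_integral_shiftCorrelation_lt (h : CommutingPair S T ν) (hν₂ : IsRelIndJoining ν S ν₂)
    (hr : UnitBounded r) {σ : ℝ}
    (hσ : ∫ p, ((ν₂[fun z ↦ r z.1 * r z.2 | invariants (Prod.map T T)]) p) ^ 2 ∂ν₂ < σ) :
    ∃ H > 0, ∃ L > 0, ∫ y, shiftCorrelation S T r H L y ∂ν < σ := by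
  have := hν₂.isProbabilityMeasure
  have hrr : UnitBounded fun z : Y × Y ↦ r z.1 * r z.2 :=
    (hr.comp measurable_fst).mul (hr.comp measurable_snd)
  have hH := tendsto_integral_sq_expect (hν₂.measurePreserving_prodMap_self h) hrr.measurable
    hrr.abs_le_one
  simp only [Prod.map_iterate, Prod.map_fst, Prod.map_snd,
    ← hν₂.expect_integral_sq_condExp h.right.measurable hr] at hH
  obtain ⟨H, hHσ, hH₀⟩ := ((hH.eventually_lt_const hσ).and (eventually_gt_atTop 0)).exists
  obtain ⟨L, hLσ, hL₀⟩ := (((tendsto_integral_shiftCorrelation h hr H).eventually_lt_const hHσ).and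
    (eventually_gt_atTop 0)).exists
  exact ⟨H, hH₀, L, hL₀, hLσ⟩

theorem lintegral_osc_orbitCubeAverage_le_of_integral_sq_lt (h : CommutingPair S T ν)
    (hν₂ : IsRelIndJoining ν S ν₂) (h₀ : UnitBounded f₀) (h₁ : UnitBounded f₁)
    (h₂ : UnitBounded f₂) (hr : UnitBounded r) {t : ℝ} (ht : 0 < t)
    (hσ : ∫ p, ((ν₂[fun z ↦ r z.1 * r z.2 | invariants (Prod.map T T)]) p) ^ 2 ∂ν₂ < t ^ 4 / 128) :
    ∫⁻ y, osc windows (orbitCubeAverage S T f₀ f₁ f₂ r · y) ∂ν ≤ ENNReal.ofReal (4 * t) := by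
  obtain ⟨H, hH, L, hL, hlt⟩ := exists_integral_shiftCorrelation_lt h hν₂ hr hσ
  set Φ := shiftCorrelation S T r H L
  have hΦ : UnitBounded Φ :=
    unitBounded_shiftCorrelation hr h.left.measurable h.right.measurable H L
  have habs (a : ℝ) : |a| ≤ t + (t ^ 3)⁻¹ * a ^ 4 := by
    rcases le_total |a| t with hat | hat
    · have : 0 ≤ (t ^ 3)⁻¹ * a ^ 4 := by positivity
      linarith
    · have : |a| ≤ (t ^ 3)⁻¹ * a ^ 4 := by
        rw [inv_mul_eq_div, le_div_iff₀ (by positivity), ← Even.pow_abs (by decide : Even 4)]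
        calc |a| * t ^ 3 ≤ |a| * |a| ^ 3 := by gcongr
          _ = |a| ^ 4 := by ring
      linarith
  have hd : Tendsto (fun q : ℕ × ℕ × ℕ ↦ t + (t ^ 3)⁻¹ *
      (128 * ((H : ℝ) / q.2.2) ^ 4 + 256 * ((L : ℝ) / q.2.1) ^ 2)) windows (𝓝 t) := by
    have hP := ((tendsto_const_div_atTop_nhds_zero_nat (H : ℝ)).comp tendsto_windows_snd_snd).pow 4
    have hK := ((tendsto_const_div_atTop_nhds_zero_nat (L : ℝ)).comp tendsto_windows_snd_fst).pow 2
    simpa using (((hP.const_mul 128).add (hK.const_mul 256)).const_mul (t ^ 3)⁻¹).const_add t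
  have hle := lintegral_osc_le (A := orbitCubeAverage S T f₀ f₁ f₂ r) (B := fun _ _ ↦ 0)
    (g := fun y ↦ 128 * (t ^ 3)⁻¹ * Φ y) (C := 128 * (t ^ 3)⁻¹ * 1) h.left h.right
    (tendsto_windows_fst.const_mul_atTop' two_pos) hd (hΦ.measurable.const_mul _)
    (fun y ↦ by rw [abs_mul, abs_of_pos (by positivity)]; gcongr; exact hΦ.abs_le_one y) <|
    .of_forall fun y ↦ by
      filter_upwards [eventually_windows_le] with ⟨N, K, P⟩ ⟨hK, hP⟩
      rw [sub_zero]
      refine (habs _).trans ?_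
      have := mul_le_mul_of_nonneg_left
        (orbitCubeAverage_pow_four_le h h₀ h₁ h₂ hr hK hP hH hL y)
        (by positivity : 0 ≤ (t ^ 3)⁻¹)
      simp only [gridAverage, ← Finset.mul_expect] at this ⊢
      linarith
  have hosc : osc windows (fun _ ↦ 0) = 0 := osc_eq_zero_iff.2 ⟨0, tendsto_const_nhds⟩
  simp only [hosc, lintegral_zero, zero_add, integral_const_mul] at hle
  refine hle.trans (ENNReal.ofReal_le_ofReal ?_)
  have : 128 * (t ^ 3)⁻¹ * ∫ y, Φ y ∂ν ≤ 128 * (t ^ 3)⁻¹ * (t ^ 4 / 128) := by gcongr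
  have ht4 : 128 * (t ^ 3)⁻¹ * (t ^ 4 / 128) = t := by field_simp
  linarith

end UncorrelatedFactor

section Clip

/-- Truncation of a real number to `[-1, 1]`. -/
noncomputable def clip (x : ℝ) : ℝ := Set.projIcc (-1) 1 (by norm_num) x

lemma measurable_clip : Measurable clip :=
  (continuous_subtype_val.comp continuous_projIcc).measurable

lemma abs_clip_le_one (x : ℝ) : |clip x| ≤ 1 := abs_le.2 (Set.projIcc (-1) 1 _ x).2

lemma clip_eq_self {x : ℝ} (hx : |x| ≤ 1) : clip x = x := by
  rw [clip, Set.projIcc_of_mem _ (abs_le.1 hx)]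

lemma abs_sub_clip_le {a : ℝ} (ha : |a| ≤ 1) (x : ℝ) : |a - clip x| ≤ |a - x| := by
  nth_rewrite 1 [← clip_eq_self ha]
  exact Set.abs_projIcc_sub_projIcc _

lemma sq_sub_clip_le {a b s : ℝ} (ha : |a| ≤ 1) (hs : |s| ≤ 1) (σ : ℝ) :
    (a - clip (b + σ * s)) ^ 2 ≤ (a - b) ^ 2 - 2 * σ * ((a - b) * s) + σ ^ 2 :=
  calc (a - clip (b + σ * s)) ^ 2 ≤ (a - (b + σ * s)) ^ 2 := sq_le_sq.2 (abs_sub_clip_le ha _)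
    _ = (a - b) ^ 2 - 2 * σ * ((a - b) * s) + σ ^ 2 * s ^ 2 := by ring
    _ ≤ (a - b) ^ 2 - 2 * σ * ((a - b) * s) + σ ^ 2 * 1 := by
        gcongr
        exact (sq_le_one_iff_abs_le_one s).2 hs
    _ = _ := by rw [mul_one]

end Clip

section EnergyIncrement

lemma orbitCubeAverage_comp_snd {Y : Type*} (S T : Y → Y) (f₀ f₁ f₂ f : Y → ℝ)
    (q : ℕ × ℕ × ℕ) (p : Y × Y) :
    orbitCubeAverage (Prod.map id S) (Prod.map T T) (fun p ↦ f₀ p.2) (fun p ↦ f₁ p.2)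
      (fun p ↦ f₂ p.2) (fun p ↦ f p.2) q p = orbitCubeAverage S T f₀ f₁ f₂ f q p.2 := by
  simp only [orbitCubeAverage, Prod.map_iterate, Prod.map_snd]

variable {Y : Type*} {m : MeasurableSpace Y} [mY : MeasurableSpace Y] {ν : Measure Y}
  {f g w s : Y → ℝ}

lemma UnitBounded.ae_abs_condExp_le_one (hf : UnitBounded f) :
    ∀ᵐ y ∂ν, |(ν[f | m]) y| ≤ 1 :=
  ae_bdd_abs_condExp_of_ae_bdd_abs (.of_forall hf.abs_le_one)

variable [IsProbabilityMeasure ν]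

lemma integral_mul_condExp (f : Y → ℝ) (hm : m ≤ mY) (hg : UnitBounded g) :
    ∫ y, g y * (ν[f | m]) y ∂ν = ∫ y, (ν[g | m]) y * (ν[f | m]) y ∂ν := by
  have hgf : Integrable (g * ν[f | m]) ν :=
    integrable_condExp.bdd_mul hg.measurable.aestronglyMeasurable (.of_forall hg.abs_le_one)
  refine (integral_condExp hm).symm.trans ?_
  exact integral_congr_ae
    (condExp_mul_of_stronglyMeasurable_right stronglyMeasurable_condExp hgf hg.integrable)

lemma integral_sq_sub_clip_le (hf : UnitBounded f) (hw : UnitBounded w) (hs : Measurable s)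
    (hs₁ : ∀ᵐ y ∂ν, |s y| ≤ 1) (σ : ℝ) :
    ∫ y, (f y - clip (w y + σ * s y)) ^ 2 ∂ν ≤
      ∫ y, (f y - w y) ^ 2 ∂ν - 2 * σ * ∫ y, (f y - w y) * s y ∂ν + σ ^ 2 := by
  have hd : Measurable fun y ↦ f y - w y := hf.measurable.sub hw.measurable
  have hd₂ (y : Y) : |f y - w y| ≤ 2 :=
    (abs_sub _ _).trans (by linarith [hf.abs_le_one y, hw.abs_le_one y])
  have hsq : Integrable (fun y ↦ (f y - w y) ^ 2) ν :=
    integrable_of_abs_le (C := 2 ^ 2) (hd.pow_const 2) fun y ↦ by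
      rw [abs_pow]
      exact pow_le_pow_left₀ (abs_nonneg _) (hd₂ y) 2
  have hds : Integrable (fun y ↦ (f y - w y) * s y) ν :=
    (integrable_of_abs_le hd hd₂).mul_bdd hs.aestronglyMeasurable hs₁
  calc ∫ y, (f y - clip (w y + σ * s y)) ^ 2 ∂ν
      ≤ ∫ y, ((f y - w y) ^ 2 - 2 * σ * ((f y - w y) * s y) + σ ^ 2) ∂ν := by
        refine integral_mono_of_nonneg (.of_forall fun y ↦ sq_nonneg _)
          ((hsq.sub (hds.const_mul _)).add (integrable_const _)) ?_
        filter_upwards [hs₁] with y hy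
        exact sq_sub_clip_le (hf.abs_le_one y) hy σ
    _ = _ := by
        rw [integral_add (f := fun y ↦ (f y - w y) ^ 2 - 2 * σ * ((f y - w y) * s y))
          (hsq.sub (hds.const_mul _)) (integrable_const _), integral_sub hsq (hds.const_mul _),
          integral_const_mul]
        simp

variable {S T : Y → Y} {f₀ f₁ f₂ : Y → ℝ} {ν₂ : Measure (Y × Y)}

lemma unitBounded_of_measurable_sup (hw : Measurable[invariants S ⊔ invariants T] w)
    (hw₁ : ∀ y, |w y| ≤ 1) : UnitBounded w :=
  ⟨hw.mono (sup_le (invariants_le S) (invariants_le T)) le_rfl, hw₁⟩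

lemma unitBounded_half_sub (hf : UnitBounded f) (hw : UnitBounded w) :
    UnitBounded fun y ↦ (f y - w y) / 2 := by
  refine ⟨(hf.measurable.sub hw.measurable).div_const 2, fun y ↦ ?_⟩
  rw [abs_div, abs_two, div_le_one two_pos]
  exact (abs_sub _ _).trans (by linarith [hf.abs_le_one y, hw.abs_le_one y])

lemma measurable_snd_invariants_sup (S T : Y → Y) :
    Measurable[invariants (Prod.map id S) ⊔ invariants (Prod.map T T), invariants S ⊔ invariants T]
      (Prod.snd : Y × Y → Y) := by
  have hsnd {R R' : Y → Y} :
      invariants R ≤ (invariants (Prod.map R' R)).map (Prod.snd : Y × Y → Y) := fun A hA ↦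
    ⟨measurable_snd hA.1, congrArg (Prod.snd ⁻¹' ·) hA.2⟩
  exact measurable_iff_le_map.2 (sup_le
    (hsnd.trans (MeasurableSpace.map_mono le_sup_left))
    (hsnd.trans (MeasurableSpace.map_mono le_sup_right)))

lemma measurable_fst_invariants_id_prodMap (S : Y → Y) {r : Y → ℝ} (hr : Measurable r) :
    Measurable[invariants (Prod.map id S)] fun p : Y × Y ↦ r p.1 :=
  fun _ hA ↦ ⟨hr.comp measurable_fst hA, rfl⟩

/- The correction is `σ r(x₀) E(r ⊗ r | I_{T×T})`, whose correlation with `r(x₁)` is `σ²`. -/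
theorem IsRelIndJoining.exists_integral_sq_sub_le (hν₂ : IsRelIndJoining ν S ν₂)
    (hf : UnitBounded f) (hw : Measurable[invariants S ⊔ invariants T] w)
    (hw₁ : ∀ y, |w y| ≤ 1) :
    ∃ w' : Y × Y → ℝ, Measurable[invariants (Prod.map id S) ⊔ invariants (Prod.map T T)] w' ∧
      (∀ p, |w' p| ≤ 1) ∧ ∫ p, (f p.2 - w' p) ^ 2 ∂ν₂ ≤ ∫ y, (f y - w y) ^ 2 ∂ν -
        3 * (∫ p, ((ν₂[fun z ↦ (f z.1 - w z.1) / 2 * ((f z.2 - w z.2) / 2) |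
          invariants (Prod.map T T)]) p) ^ 2 ∂ν₂) ^ 2 := by
  have := hν₂.isProbabilityMeasure
  have hwu := unitBounded_of_measurable_sup hw hw₁
  have hr := unitBounded_half_sub hf hwu
  set r : Y → ℝ := fun y ↦ (f y - w y) / 2
  have hrr : UnitBounded fun z : Y × Y ↦ r z.1 * r z.2 :=
    (hr.comp measurable_fst).mul (hr.comp measurable_snd)
  set G := ν₂[fun z ↦ r z.1 * r z.2 | invariants (Prod.map T T)]
  set σ := ∫ p, G p ^ 2 ∂ν₂
  have hG : Measurable[invariants (Prod.map T T)] G := stronglyMeasurable_condExp.measurable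
  have hcorr : ∫ p, (f p.2 - w p.2) * (r p.1 * G p) ∂ν₂ = 2 * σ := by
    have hrG : ∫ p, r p.1 * r p.2 * G p ∂ν₂ = σ := by
      simpa only [← sq] using integral_mul_condExp (fun z ↦ r z.1 * r z.2)
        (invariants_le (Prod.map T T)) hrr
    rw [← hrG, ← integral_const_mul]
    refine integral_congr_ae (.of_forall fun p ↦ ?_)
    simp only [r]
    ring
  have hle := integral_sq_sub_clip_le (ν := ν₂) (s := fun p ↦ r p.1 * G p)
    (hf.comp measurable_snd) (hwu.comp measurable_snd)
    ((hr.measurable.comp measurable_fst).mul (hG.mono (invariants_le _) le_rfl))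
    (hrr.ae_abs_condExp_le_one.mono fun p hp ↦ abs_mul_le_one (hr.abs_le_one _) hp) σ
  refine ⟨fun p ↦ clip (w p.2 + σ * (r p.1 * G p)), ?_, fun p ↦ abs_clip_le_one _, ?_⟩
  · refine measurable_clip.comp ((hw.comp (measurable_snd_invariants_sup S T)).add
      (Measurable.const_mul (.mul ?_ ?_) σ))
    · exact (measurable_fst_invariants_id_prodMap S hr.measurable).mono le_sup_left le_rfl
    · exact hG.mono le_sup_right le_rfl
  · rw [hcorr, integral_comp_eq_of_measurePreserving hν₂.measurePreserving_snd
      (f := fun y ↦ (f y - w y) ^ 2)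
      ((hf.measurable.sub hwu.measurable).pow_const 2).aestronglyMeasurable] at hle
    linarith

lemma lintegral_osc_orbitCubeAverage_le_of_integral_sq_half_sub_lt (h : CommutingPair S T ν)
    (hν₂ : IsRelIndJoining ν S ν₂) (h₀ : UnitBounded f₀) (h₁ : UnitBounded f₁)
    (h₂ : UnitBounded f₂) (hf : UnitBounded f) (hw : Measurable[invariants S ⊔ invariants T] w)
    (hw₁ : ∀ y, |w y| ≤ 1) {t : ℝ} (ht : 0 < t)
    (hσ : ∫ p, ((ν₂[fun z ↦ (f z.1 - w z.1) / 2 * ((f z.2 - w z.2) / 2) |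
      invariants (Prod.map T T)]) p) ^ 2 ∂ν₂ < t ^ 4 / 128) :
    ∫⁻ y, osc windows (orbitCubeAverage S T f₀ f₁ f₂ f · y) ∂ν ≤ ENNReal.ofReal (8 * t) := by
  have hr := unitBounded_half_sub hf (unitBounded_of_measurable_sup hw hw₁)
  set r : Y → ℝ := fun y ↦ (f y - w y) / 2
  have hfwr : f = w + (2 : ℝ) • r := by
    ext y
    simp only [r, Pi.add_apply, Pi.smul_apply, smul_eq_mul]
    ring
  have hmeas (q : ℕ × ℕ × ℕ) := measurable_orbitCubeAverage h.left.measurable h.right.measurable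
    h₀.measurable h₁.measurable h₂.measurable hr.measurable q
  calc ∫⁻ y, osc windows (orbitCubeAverage S T f₀ f₁ f₂ f · y) ∂ν
      ≤ ∫⁻ y, ENNReal.ofReal |2| * osc windows (orbitCubeAverage S T f₀ f₁ f₂ r · y) ∂ν := by
        refine lintegral_mono_ae ?_
        filter_upwards [ae_exists_tendsto_orbitCubeAverage_of_measurable h h₀ h₁ h₂ hw hw₁]
          with y ⟨c, hc⟩
        simp only [hfwr, orbitCubeAverage_add, orbitCubeAverage_smul]
        exact osc_add_const_mul_le hc 2
    _ = ENNReal.ofReal 2 * ∫⁻ y, osc windows (orbitCubeAverage S T f₀ f₁ f₂ r · y) ∂ν := by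
        rw [abs_two, lintegral_const_mul _ (measurable_osc hmeas)]
    _ ≤ ENNReal.ofReal 2 * ENNReal.ofReal (4 * t) := by
        gcongr
        exact lintegral_osc_orbitCubeAverage_le_of_integral_sq_lt h hν₂ h₀ h₁ h₂ hr ht hσ
    _ = ENNReal.ofReal (8 * t) := by
        rw [← ENNReal.ofReal_mul zero_le_two]
        ring_nf

end EnergyIncrement

section Convergence

universe u

/- Induction on the energy budget: unless the oscillation is small already, some `w'` on the
extension `Y × Y` lowers the energy `∫ (f - w)²` by a fixed amount. -/
theorem lintegral_osc_orbitCubeAverage_le_of_integral_sq_sub_lt {Y : Type u} [MeasurableSpace Y]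
    [StandardBorelSpace Y] {ν : Measure Y} [IsProbabilityMeasure ν] {S T : Y → Y}
    {f₀ f₁ f₂ f w : Y → ℝ} (h : CommutingPair S T ν) (h₀ : UnitBounded f₀) (h₁ : UnitBounded f₁)
    (h₂ : UnitBounded f₂) (hf : UnitBounded f) (hw : Measurable[invariants S ⊔ invariants T] w)
    (hw₁ : ∀ y, |w y| ≤ 1) {t : ℝ} (ht : 0 < t) {m : ℕ}
    (hm : ∫ y, (f y - w y) ^ 2 ∂ν < m * (3 * (t ^ 4 / 128) ^ 2)) :
    ∫⁻ y, osc windows (orbitCubeAverage S T f₀ f₁ f₂ f · y) ∂ν ≤ ENNReal.ofReal (8 * t) := by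
  induction m generalizing Y with
  | zero =>
    rw [Nat.cast_zero, zero_mul] at hm
    exact absurd hm (integral_nonneg fun y ↦ sq_nonneg _).not_gt
  | succ m ih =>
    obtain ⟨ν₂, hν₂⟩ := exists_isRelIndJoining ν S
    have := hν₂.isProbabilityMeasure
    rcases lt_or_ge (∫ p, ((ν₂[fun z ↦ (f z.1 - w z.1) / 2 * ((f z.2 - w z.2) / 2) |
      invariants (Prod.map T T)]) p) ^ 2 ∂ν₂) (t ^ 4 / 128) with hlt | hge
    · exact lintegral_osc_orbitCubeAverage_le_of_integral_sq_half_sub_lt h hν₂ h₀ h₁ h₂ hf hw hw₁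
        ht hlt
    obtain ⟨w', hw', hw'₁, hle⟩ := hν₂.exists_integral_sq_sub_le hf hw hw₁
    have hm' : ∫ p, (f p.2 - w' p) ^ 2 ∂ν₂ < m * (3 * (t ^ 4 / 128) ^ 2) := by
      have hsq := pow_le_pow_left₀ (by positivity) hge 2
      push_cast at hm
      linarith
    have hext := ih (hν₂.commutingPair h) (h₀.comp measurable_snd) (h₁.comp measurable_snd)
      (h₂.comp measurable_snd) (hf.comp measurable_snd) hw' hw'₁ hm'
    simp only [orbitCubeAverage_comp_snd] at hext
    rwa [hν₂.measurePreserving_snd.lintegral_comp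
      (f := fun y ↦ osc windows (orbitCubeAverage S T f₀ f₁ f₂ f · y))
      (measurable_osc fun q ↦ measurable_orbitCubeAverage h.left.measurable h.right.measurable
        h₀.measurable h₁.measurable h₂.measurable hf.measurable q)] at hext

theorem ae_exists_tendsto_orbitCubeAverage_of_standardBorelSpace {Y : Type*} [MeasurableSpace Y]
    [StandardBorelSpace Y] {ν : Measure Y} [IsProbabilityMeasure ν] {S T : Y → Y}
    {f₀ f₁ f₂ f : Y → ℝ} (h : CommutingPair S T ν) (h₀ : UnitBounded f₀) (h₁ : UnitBounded f₁)
    (h₂ : UnitBounded f₂) (hf : UnitBounded f) :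
    ∀ᵐ y ∂ν, ∃ c, Tendsto (orbitCubeAverage S T f₀ f₁ f₂ f · y) windows (𝓝 c) := by
  rw [← lintegral_osc_eq_zero_iff fun q ↦ measurable_orbitCubeAverage h.left.measurable
    h.right.measurable h₀.measurable h₁.measurable h₂.measurable hf.measurable q]
  have hlim : Tendsto (fun t : ℝ ↦ ENNReal.ofReal (8 * t)) (𝓝[>] 0) (𝓝 0) := by
    refine tendsto_nhdsWithin_of_tendsto_nhds ?_
    simpa only [Function.comp_def, mul_zero, ENNReal.ofReal_zero] using
      (ENNReal.continuous_ofReal.comp (continuous_const_mul (8 : ℝ))).tendsto 0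
  refine le_antisymm (ge_of_tendsto hlim (eventually_nhdsWithin_of_forall fun t ht ↦ ?_)) zero_le
  have ht₀ : 0 < t := ht
  obtain ⟨m, hm⟩ := exists_lt_nsmul (by positivity : 0 < 3 * (t ^ 4 / 128) ^ 2)
    (∫ y, (f y - 0) ^ 2 ∂ν)
  rw [nsmul_eq_mul] at hm
  exact lintegral_osc_orbitCubeAverage_le_of_integral_sq_sub_lt (w := fun _ ↦ 0) h h₀ h₁ h₂ hf
    measurable_const (by simp) ht₀ hm

end Convergence

section OrbitCode

variable {X ι : Type*} {S T : X → X} {f : ι → X → ℝ}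

/-- The array `(i, j) ↦ (f m (S^i T^j x))_m` of values of the functions `f m` along the orbit
of `x`. It factors the action of `S`, `T` onto the two shifts of a space of arrays, which for
countable `ι` is standard Borel even if `X` is not. -/
def orbitCode (S T : X → X) (f : ι → X → ℝ) (x : X) : ℕ → ℕ → ι → ℝ :=
  fun i j m ↦ f m (S^[i] (T^[j] x))

/-- The shift of a two-parameter array in its first parameter. -/
def shiftFst {α : Type*} (ω : ℕ → ℕ → α) : ℕ → ℕ → α := fun i j ↦ ω (i + 1) j

/-- The shift of a two-parameter array in its second parameter. -/
def shiftSnd {α : Type*} (ω : ℕ → ℕ → α) : ℕ → ℕ → α := fun i j ↦ ω i (j + 1)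

lemma semiconj_orbitCode_shiftFst (hcomm : Function.Commute S T) :
    Function.Semiconj (orbitCode S T f) S shiftFst := fun x ↦ by
  ext i j m
  simp only [orbitCode, shiftFst, Function.iterate_succ_apply, (hcomm.iterate_right j).eq x]

lemma semiconj_orbitCode_shiftSnd : Function.Semiconj (orbitCode S T f) T shiftSnd := fun x ↦ by
  ext i j m
  simp only [orbitCode, shiftSnd, Function.iterate_succ_apply]

lemma orbitCode_apply_iterate (hcomm : Function.Commute S T) (i j : ℕ) (x : X) :
    shiftFst^[i] (shiftSnd^[j] (orbitCode S T f x)) 0 0 = (f · (S^[i] (T^[j] x))) := by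
  rw [← (semiconj_orbitCode_shiftSnd.iterate_right j).eq,
    ← ((semiconj_orbitCode_shiftFst hcomm).iterate_right i).eq]
  rfl

variable [MeasurableSpace X] {μ : Measure X}

lemma measurable_orbitCode (hS : Measurable S) (hT : Measurable T) (hf : ∀ m, Measurable (f m)) :
    Measurable (orbitCode S T f) :=
  measurable_pi_lambda _ fun i ↦ measurable_pi_lambda _ fun j ↦ measurable_pi_lambda _ fun m ↦
    (hf m).comp ((hS.iterate i).comp (hT.iterate j))

lemma measurePreserving_map_of_semiconj {Y : Type*} [MeasurableSpace Y] {R : X → X} {R' : Y → Y}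
    {φ : X → Y} (hR : MeasurePreserving R μ μ) (hφ : Measurable φ) (hR' : Measurable R')
    (h : Function.Semiconj φ R R') : MeasurePreserving R' (μ.map φ) (μ.map φ) := by
  refine ⟨hR', ?_⟩
  rw [Measure.map_map hR' hφ, ← h.comp_eq, ← Measure.map_map hφ hR.measurable, hR.map_eq]

lemma CommutingPair.map_orbitCode (h : CommutingPair S T μ) (hf : ∀ m, Measurable (f m)) :
    CommutingPair shiftFst shiftSnd (μ.map (orbitCode S T f)) := by
  have hcode := measurable_orbitCode h.left.measurable h.right.measurable hf
  refine ⟨measurePreserving_map_of_semiconj h.left hcode ?_ (semiconj_orbitCode_shiftFst h.comm),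
    measurePreserving_map_of_semiconj h.right hcode ?_ semiconj_orbitCode_shiftSnd, fun _ ↦ rfl⟩
  · unfold shiftFst
    fun_prop
  · unfold shiftSnd
    fun_prop

theorem ae_exists_tendsto_orbitCubeAverage [IsProbabilityMeasure μ] {f₀ f₁ f₂ f₃ : X → ℝ}
    (h : CommutingPair S T μ) (h₀ : UnitBounded f₀) (h₁ : UnitBounded f₁) (h₂ : UnitBounded f₂)
    (h₃ : UnitBounded f₃) :
    ∀ᵐ x ∂μ, ∃ c, Tendsto (orbitCubeAverage S T f₀ f₁ f₂ f₃ · x) windows (𝓝 c) := by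
  set f : Fin 4 → X → ℝ := ![f₀, f₁, f₂, f₃]
  have hf : ∀ m, UnitBounded (f m) := by
    intro m
    fin_cases m <;> assumption
  have hcode := measurable_orbitCode h.left.measurable h.right.measurable fun m ↦ (hf m).measurable
  have : IsProbabilityMeasure (μ.map (orbitCode S T f)) :=
    Measure.isProbabilityMeasure_map hcode.aemeasurable
  have : StandardBorelSpace (Fin 4 → ℝ) := standardBorel_of_polish
  have : StandardBorelSpace (ℕ → Fin 4 → ℝ) := standardBorel_of_polish
  have : StandardBorelSpace (ℕ → ℕ → Fin 4 → ℝ) := standardBorel_of_polish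
  have hcoord (m : Fin 4) : UnitBounded fun ω : ℕ → ℕ → Fin 4 → ℝ ↦ clip (ω 0 0 m) :=
    ⟨measurable_clip.comp (by fun_prop), fun _ ↦ abs_clip_le_one _⟩
  filter_upwards [ae_of_ae_map hcode.aemeasurable
    (ae_exists_tendsto_orbitCubeAverage_of_standardBorelSpace
      (h.map_orbitCode fun m ↦ (hf m).measurable) (hcoord 0) (hcoord 1) (hcoord 2) (hcoord 3))]
    with x hx
  simp only [orbitCubeAverage, orbitCode_apply_iterate h.comm,
    clip_eq_self ((hf _).abs_le_one _)] at hx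
  exact hx

end OrbitCode

section Limit

lemma eventually_iterated_of_eventually_windows {r : ℕ × ℕ × ℕ → Prop}
    (h : ∀ᶠ q in windows, r q) :
    ∀ᶠ P in atTop, ∀ᶠ K in atTop, ∀ᶠ N in atTop, r (N, K, P) := by
  have hrev : Tendsto (fun q : ℕ × ℕ × ℕ ↦ (q.2.2, q.2.1, q.1)) (atTop ×ˢ atTop ×ˢ atTop)
      (atTop ×ˢ atTop ×ˢ atTop) :=
    (tendsto_snd.comp tendsto_snd).prodMk ((tendsto_fst.comp tendsto_snd).prodMk tendsto_fst)
  filter_upwards [(hrev.eventually (eventually_inf_principal.1 h)).curry] with P hP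
  filter_upwards [hP.curry] with K hK
  filter_upwards [hK, eventually_ge_atTop K, eventually_ge_atTop P] with N hN hNK hNP
  exact hN ⟨hNK, hNP⟩

lemma eq_of_tendsto_windows {E : Type*} [MetricSpace E] {a : ℕ × ℕ × ℕ → E} {b : ℕ → ℕ → E}
    {d : ℕ → E} {c L : E} (ha : Tendsto a windows (𝓝 c))
    (hN : ∀ K P, Tendsto (fun N ↦ a (N, K, P)) atTop (𝓝 (b K P)))
    (hK : ∀ P, Tendsto (b · P) atTop (𝓝 (d P))) (hP : Tendsto d atTop (𝓝 L)) : c = L := by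
  refine eq_of_forall_dist_le fun ε hε ↦ (dist_comm _ _).trans_le ?_
  have hball : IsClosed (Metric.closedBall c ε) := Metric.isClosed_closedBall
  refine hball.mem_of_tendsto hP ?_
  filter_upwards [eventually_iterated_of_eventually_windows
    (ha.eventually_mem (Metric.closedBall_mem_nhds c hε))] with P haP
  refine hball.mem_of_tendsto (hK P) ?_
  filter_upwards [haP] with K haK
  exact hball.mem_of_tendsto (hN K P) haK

section Parallelograms

variable {X : Type*} {S T : X → X} {f₀ f₁ f₂ f₃ : X → ℝ}

lemma gridAverage_expect {ι : Type*} (S T : X → X) (s : Finset ι) (φ : ι → X → ℝ) (N : ℕ)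
    (x : X) :
    gridAverage S T (fun z ↦ 𝔼 k ∈ s, φ k z) N x = 𝔼 k ∈ s, gridAverage S T (φ k) N x := by
  simp only [gridAverage]
  rw [Finset.expect_comm (s := s)]
  refine Finset.expect_congr rfl fun i _ ↦ ?_
  rw [Finset.expect_comm]

/-- The product of `f₀, f₁, f₂, f₃` over the vertices `z`, `S^k z`, `T^p z`, `S^k T^p z` of a
parallelogram in the orbit of `z`. -/
def parallelogramProduct (S T : X → X) (f₀ f₁ f₂ f₃ : X → ℝ) (k p : ℕ) (z : X) : ℝ :=
  f₀ z * f₁ (S^[k] z) * f₂ (T^[p] z) * f₃ (S^[k] (T^[p] z))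

lemma orbitCubeAverage_eq_expect_gridAverage (hcomm : Function.Commute S T) (N K P : ℕ) (x : X) :
    orbitCubeAverage S T f₀ f₁ f₂ f₃ (N, K, P) x = 𝔼 p ∈ range P, 𝔼 k ∈ range K,
      gridAverage S T (parallelogramProduct S T f₀ f₁ f₂ f₃ k p) N x := by
  have hvertex (i j k p : ℕ) : f₀ (S^[i] (T^[j] x)) * f₁ (S^[i + k] (T^[j] x)) *
      f₂ (S^[i] (T^[j + p] x)) * f₃ (S^[i + k] (T^[j + p] x)) =
        parallelogramProduct S T f₀ f₁ f₂ f₃ k p (S^[i] (T^[j] x)) := by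
    rw [parallelogramProduct, ← (hcomm.iterate_iterate i p).eq, add_comm i k, add_comm j p,
      Function.iterate_add_apply S, Function.iterate_add_apply S, Function.iterate_add_apply T]
  simp only [← gridAverage_expect]
  refine Finset.expect_congr rfl fun i _ ↦ Finset.expect_congr rfl fun j _ ↦ ?_
  simp only [hvertex]
  exact Finset.expect_comm ..

variable [MeasurableSpace X] {μ : Measure X}

lemma unitBounded_parallelogramProduct (hS : Measurable S) (hT : Measurable T)
    (h₀ : UnitBounded f₀) (h₁ : UnitBounded f₁) (h₂ : UnitBounded f₂) (h₃ : UnitBounded f₃)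
    (k p : ℕ) : UnitBounded (parallelogramProduct S T f₀ f₁ f₂ f₃ k p) :=
  ((h₀.mul (h₁.comp (hS.iterate k))).mul (h₂.comp (hT.iterate p))).mul
    (h₃.comp ((hS.iterate k).comp (hT.iterate p)))

lemma UnitBounded.tendsto_expect_integral_mul [IsProbabilityMeasure μ] {R : X → X} {f g : X → ℝ}
    (hf : UnitBounded f) (hg : UnitBounded g) (hR : MeasurePreserving R μ μ) :
    Tendsto (fun N ↦ 𝔼 n ∈ range N, ∫ x, g x * f (R^[n] x) ∂μ) atTop
      (𝓝 (∫ x, (μ[g | invariants R]) x * (μ[f | invariants R]) x ∂μ)) := by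
  rw [← integral_mul_condExp f (invariants_le R) hg]
  refine (tendsto_integral_mul_expect hR hf.measurable hf.abs_le_one hg.integrable).congr
    fun N ↦ ?_
  simp only [Finset.mul_expect]
  exact integral_expect _ fun n _ ↦ (hg.mul (hf.comp (hR.measurable.iterate n))).integrable

variable [IsProbabilityMeasure μ] {μS : Measure (X × X)}

lemma IsRelIndJoining.tendsto_expect_integral_parallelogramProduct (h : CommutingPair S T μ)
    (hμS : IsRelIndJoining μ S μS) (h₀ : UnitBounded f₀) (h₁ : UnitBounded f₁)
    (h₂ : UnitBounded f₂) (h₃ : UnitBounded f₃) (p : ℕ) :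
    Tendsto (fun K ↦ 𝔼 k ∈ range K, ∫ x, parallelogramProduct S T f₀ f₁ f₂ f₃ k p x ∂μ) atTop
      (𝓝 (∫ z, f₀ z.1 * f₁ z.2 * (f₂ (T^[p] z.1) * f₃ (T^[p] z.2)) ∂μS)) := by
  have hT := h.right.measurable.iterate p
  have hg := h₀.mul (h₂.comp hT)
  have hf := h₁.mul (h₃.comp hT)
  have hlim := hf.tendsto_expect_integral_mul hg h.left
  rw [← hμS.integral_mul hg hf] at hlim
  simpa only [parallelogramProduct, (h.comm.iterate_iterate _ p).eq, mul_assoc (_ * _),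
    mul_mul_mul_comm (f₀ _) (f₂ _)] using hlim

lemma IsHostJoining.tendsto_expect_integral (h : CommutingPair S T μ)
    (hμS : IsRelIndJoining μ S μS) {μST : Measure (X × X × X × X)} (hμST : IsHostJoining μS T μST)
    (h₀ : UnitBounded f₀) (h₁ : UnitBounded f₁) (h₂ : UnitBounded f₂) (h₃ : UnitBounded f₃) :
    Tendsto (fun P ↦ 𝔼 p ∈ range P,
        ∫ z, f₀ z.1 * f₁ z.2 * (f₂ (T^[p] z.1) * f₃ (T^[p] z.2)) ∂μS) atTop
      (𝓝 (∫ q, f₀ q.1 * f₁ q.2.1 * f₂ q.2.2.1 * f₃ q.2.2.2 ∂μST)) := by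
  have := hμS.isProbabilityMeasure
  have hlim := ((h₂.comp measurable_fst).mul (h₃.comp measurable_snd)).tendsto_expect_integral_mul
    ((h₀.comp measurable_fst).mul (h₁.comp measurable_snd)) (hμS.measurePreserving_prodMap_self h)
  simp only [Prod.map_iterate, Prod.map_fst, Prod.map_snd] at hlim
  rwa [hμST f₀ f₁ f₂ f₃ h₀.measurable h₁.measurable h₂.measurable h₃.measurable
    ⟨1, h₀.abs_le_one⟩ ⟨1, h₁.abs_le_one⟩ ⟨1, h₂.abs_le_one⟩ ⟨1, h₃.abs_le_one⟩]

theorem ae_tendsto_orbitCubeAverage (h : CommutingPair S T μ)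
    (herg : ∀ s : Set X, MeasurableSet s → S ⁻¹' s = s → T ⁻¹' s = s → μ s = 0 ∨ μ s = 1)
    (hμS : IsRelIndJoining μ S μS) {μST : Measure (X × X × X × X)} (hμST : IsHostJoining μS T μST)
    (h₀ : UnitBounded f₀) (h₁ : UnitBounded f₁) (h₂ : UnitBounded f₂) (h₃ : UnitBounded f₃) :
    ∀ᵐ x ∂μ, Tendsto (orbitCubeAverage S T f₀ f₁ f₂ f₃ · x) windows
      (𝓝 (∫ q, f₀ q.1 * f₁ q.2.1 * f₂ q.2.2.1 * f₃ q.2.2.2 ∂μST)) := by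
  have hgrid : ∀ᵐ x ∂μ, ∀ k p,
      Tendsto (gridAverage S T (parallelogramProduct S T f₀ f₁ f₂ f₃ k p) · x) atTop
        (𝓝 (∫ z, parallelogramProduct S T f₀ f₁ f₂ f₃ k p z ∂μ)) := by
    refine ae_all_iff.2 fun k ↦ ae_all_iff.2 fun p ↦ ?_
    have hprod := unitBounded_parallelogramProduct h.left.measurable h.right.measurable h₀ h₁ h₂ h₃
      k p
    exact ae_tendsto_gridAverage_integral h.left h.right h.comm herg hprod.measurable
      hprod.abs_le_one
  filter_upwards [hgrid, ae_exists_tendsto_orbitCubeAverage h h₀ h₁ h₂ h₃] with x hx ⟨c, hc⟩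
  suffices c = ∫ q, f₀ q.1 * f₁ q.2.1 * f₂ q.2.2.1 * f₃ q.2.2.2 ∂μST from this ▸ hc
  refine eq_of_tendsto_windows (b := fun K P ↦ 𝔼 p ∈ range P, 𝔼 k ∈ range K,
    ∫ z, parallelogramProduct S T f₀ f₁ f₂ f₃ k p z ∂μ) hc (fun K P ↦ ?_) (fun P ↦ ?_)
    (hμST.tendsto_expect_integral h hμS h₀ h₁ h₂ h₃)
  · simp only [orbitCubeAverage_eq_expect_gridAverage h.comm]
    refine tendsto_expect (range P) fun p _ ↦ ?_
    refine tendsto_expect (range K) fun k _ ↦ ?_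
    exact hx k p
  · refine tendsto_expect (range P) fun p _ ↦ ?_
    exact hμS.tendsto_expect_integral_parallelogramProduct h h₀ h₁ h₂ h₃ p

end Parallelograms

end Limit

section BoundedFactors

variable {X : Type*} {S T : X → X}

lemma inv_pow_mul_sum_eq_orbitCubeAverage (f₀ f₁ f₂ f₃ : X → ℝ) (N : ℕ) (x : X) :
    ((N : ℝ) ^ 4)⁻¹ * ∑ i ∈ range N, ∑ j ∈ range N, ∑ k ∈ range N, ∑ p ∈ range N,
        f₀ (S^[i] (T^[j] x)) * f₁ (S^[i + k] (T^[j] x)) *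
        f₂ (S^[i] (T^[j + p] x)) * f₃ (S^[i + k] (T^[j + p] x)) =
      orbitCubeAverage S T f₀ f₁ f₂ f₃ (N, N, N) x := by
  simp only [orbitCubeAverage, cubeAverage, Finset.expect_eq_sum_div_card, Finset.card_range,
    ← Finset.sum_div]
  ring

lemma orbitCubeAverage_smul_smul_smul_smul (c₀ c₁ c₂ c₃ : ℝ) (f₀ f₁ f₂ f₃ : X → ℝ)
    (q : ℕ × ℕ × ℕ) (x : X) :
    orbitCubeAverage S T (c₀ • f₀) (c₁ • f₁) (c₂ • f₂) (c₃ • f₃) q x =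
      c₀ * c₁ * c₂ * c₃ * orbitCubeAverage S T f₀ f₁ f₂ f₃ q x := by
  simp only [orbitCubeAverage, cubeAverage, Finset.mul_expect, Pi.smul_apply, smul_eq_mul,
    mul_mul_mul_comm]

variable [MeasurableSpace X] {μ : Measure X}

lemma exists_eq_smul_unitBounded {f : X → ℝ} (hf : Measurable f) (hb : ∃ C, ∀ x, |f x| ≤ C) :
    ∃ (c : ℝ) (g : X → ℝ), UnitBounded g ∧ f = c • g := by
  obtain ⟨C, hC⟩ := hb
  have hpos : 0 < |C| + 1 := by positivity
  refine ⟨|C| + 1, (|C| + 1)⁻¹ • f, ⟨hf.const_smul _, fun x ↦ ?_⟩, (smul_inv_smul₀ hpos.ne' f).symm⟩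
  rw [Pi.smul_apply, smul_eq_mul, abs_mul, abs_inv, abs_of_pos hpos, inv_mul_le_one₀ hpos]
  linarith [hC x, le_abs_self C]

theorem pointwise_fourfold_average_general [IsProbabilityMeasure μ]
    (hS : MeasurePreserving S μ μ) (hT : MeasurePreserving T μ μ) (hcomm : ∀ x, S (T x) = T (S x))
    (herg : ∀ s : Set X, MeasurableSet s → S ⁻¹' s = s → T ⁻¹' s = s → μ s = 0 ∨ μ s = 1)
    {μS : Measure (X × X)} (hμS : IsRelIndJoining μ S μS)
    {μST : Measure (X × X × X × X)} (hμST : IsHostJoining μS T μST) {f0 f1 f2 f3 : X → ℝ}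
    (hf0 : Measurable f0) (hf1 : Measurable f1) (hf2 : Measurable f2) (hf3 : Measurable f3)
    (hb0 : ∃ C, ∀ x, |f0 x| ≤ C) (hb1 : ∃ C, ∀ x, |f1 x| ≤ C)
    (hb2 : ∃ C, ∀ x, |f2 x| ≤ C) (hb3 : ∃ C, ∀ x, |f3 x| ≤ C) :
    ∀ᵐ x ∂μ, Tendsto (fun N : ℕ ↦
      ((N : ℝ) ^ 4)⁻¹ * ∑ i ∈ range N, ∑ j ∈ range N, ∑ k ∈ range N, ∑ p ∈ range N,
        f0 (S^[i] (T^[j] x)) * f1 (S^[i + k] (T^[j] x)) *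
        f2 (S^[i] (T^[j + p] x)) * f3 (S^[i + k] (T^[j + p] x)))
      atTop (𝓝 (∫ q, f0 q.1 * f1 q.2.1 * f2 q.2.2.1 * f3 q.2.2.2 ∂μST)) := by
  obtain ⟨c₀, g₀, h₀, rfl⟩ := exists_eq_smul_unitBounded hf0 hb0
  obtain ⟨c₁, g₁, h₁, rfl⟩ := exists_eq_smul_unitBounded hf1 hb1
  obtain ⟨c₂, g₂, h₂, rfl⟩ := exists_eq_smul_unitBounded hf2 hb2
  obtain ⟨c₃, g₃, h₃, rfl⟩ := exists_eq_smul_unitBounded hf3 hb3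
  filter_upwards [ae_tendsto_orbitCubeAverage ⟨hS, hT, hcomm⟩ herg hμS hμST h₀ h₁ h₂ h₃] with x hx
  have hlim := (hx.comp tendsto_diag_windows).const_mul (c₀ * c₁ * c₂ * c₃)
  rw [← integral_const_mul] at hlim
  simp only [inv_pow_mul_sum_eq_orbitCubeAverage, orbitCubeAverage_smul_smul_smul_smul]
  simpa only [Pi.smul_apply, smul_eq_mul, mul_mul_mul_comm, Function.comp_apply] using hlim

end BoundedFactors

/-- a.e. convergence of the four-fold cubic average to
`∫ f0 ⊗ f1 ⊗ f2 ⊗ f3 dμ_{S,T}`. -/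
theorem pointwise_fourfold_average {X : Type*} [MeasurableSpace X]
    (μ : Measure X) [IsProbabilityMeasure μ]
    (S T : X ≃ᵐ X) (hS : MeasurePreserving S μ μ) (hT : MeasurePreserving T μ μ)
    (hcomm : ∀ x, S (T x) = T (S x))
    (herg : ∀ s : Set X, MeasurableSet s → ⇑S ⁻¹' s = s → ⇑T ⁻¹' s = s → μ s = 0 ∨ μ s = 1)
    (μS : Measure (X × X)) (hμS : IsRelIndJoining μ ⇑S μS)
    (μST : Measure (X × X × X × X)) (hμST : IsHostJoining μS ⇑T μST)
    (f0 f1 f2 f3 : X → ℝ)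
    (hf0 : Measurable f0) (hf1 : Measurable f1) (hf2 : Measurable f2) (hf3 : Measurable f3)
    (hb0 : ∃ C, ∀ x, |f0 x| ≤ C) (hb1 : ∃ C, ∀ x, |f1 x| ≤ C)
    (hb2 : ∃ C, ∀ x, |f2 x| ≤ C) (hb3 : ∃ C, ∀ x, |f3 x| ≤ C) :
    ∀ᵐ x ∂μ, Tendsto (fun N : ℕ =>
      ((N : ℝ) ^ 4)⁻¹ * ∑ i ∈ Finset.range N, ∑ j ∈ Finset.range N,
        ∑ k ∈ Finset.range N, ∑ p ∈ Finset.range N,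
          f0 ((⇑S)^[i] ((⇑T)^[j] x)) * f1 ((⇑S)^[i + k] ((⇑T)^[j] x)) *
          f2 ((⇑S)^[i] ((⇑T)^[j + p] x)) * f3 ((⇑S)^[i + k] ((⇑T)^[j + p] x)))
      atTop (nhds (∫ q, f0 q.1 * f1 q.2.1 * f2 q.2.2.1 * f3 q.2.2.2 ∂μST)) := by
  exact pointwise_fourfold_average_general hS hT hcomm herg hμS hμST hf0 hf1 hf2 hf3 hb0 hb1 hb2 hb3
end

section
/- Let (X,S,T) be a strictly ergodic topological dynamical system with commuting homeomorphisms and unique invariant measure μ, such that (Q_{S,T}(X), G_{S,T}) is uniquely ergodic with unique invariant measure μ_{S,T}. Then for any continuous functions f0, f1, f2, f3 on X and every x ∈ X, (1/N⁴) Σ_{i=0}^{N-1} Σ_{j=0}^{N-1} Σ_{k=-i}^{N-1-i} Σ_{p=-j}^{N-1-j} f0(S^i T^j x) · f1(S^{i+k} T^j x) · f2(S^i T^{j+p} x) · f3(S^{i+k} T^{j+p} x) converges, as N → ∞, to ∫ f0(x0) f1(x1) f2(x2) f3(x3) dμ_{S,T}(x0,x1,x2,x3). -/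
open MeasureTheory Topology Filter

/-- The dynamical cube `Q_{S,T}(X)`. -/
def cubeQ {X : Type*} [TopologicalSpace X] (S T : X ≃ₜ X) : Set (X × X × X × X) :=
  closure {p | ∃ (x : X) (i j : ℤ),
    p = (x, (S.toEquiv ^ i) x, (T.toEquiv ^ j) x, (S.toEquiv ^ i) ((T.toEquiv ^ j) x))}

/-- The permutation `id × S × id × S` of `X⁴`. -/
def sideS {X : Type*} (S : X ≃ X) : Equiv.Perm (X × X × X × X) :=
  (Equiv.refl X).prodCongr (S.prodCongr ((Equiv.refl X).prodCongr S))

/-- The permutation `id × id × T × T` of `X⁴`. -/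
def sideT {X : Type*} (T : X ≃ X) : Equiv.Perm (X × X × X × X) :=
  (Equiv.refl X).prodCongr ((Equiv.refl X).prodCongr (T.prodCongr T))

/-- The diagonal permutation `g × g × g × g` of `X⁴`. -/
def diag4 {X : Type*} (g : X ≃ X) : Equiv.Perm (X × X × X × X) :=
  g.prodCongr (g.prodCongr (g.prodCongr g))

/-- The group `G_{S,T}` generated by `id×S×id×S`, `id×id×T×T` and `g×g×g×g` for `g` in the
group generated by `S` and `T`. -/
def GST {X : Type*} (S T : X ≃ X) : Subgroup (Equiv.Perm (X × X × X × X)) :=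
  Subgroup.closure ({sideS S, sideT T} ∪
    {d | ∃ g ∈ Subgroup.closure {S, T}, d = diag4 g})

/-!
The skewed average at `x` is the integral of `f₀ ⊗ f₁ ⊗ f₂ ⊗ f₃` against the empirical measure of
the points `(S^i T^j x, S^a T^j x, S^i T^b x, S^a T^b x)`, where `i, j, a = i + k, b = j + p`
range independently over `[0, N)`. These points lie on the cube `Q_{S,T}(X)`, and each of the four
generators of `G_{S,T}` acts on them by translating one or two of the indices. Boxes being Følner
sets, translations move a vanishing proportion of the points, so every weak-* cluster point of the
empirical measures is invariant under `G_{S,T}` and carried by the cube. Unique ergodicity leaves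
`μ_{S,T}` as the only cluster point, and compactness gives convergence.
-/

section Foelner

open scoped BigOperators

variable {α I J : Type*} [DecidableEq I] [DecidableEq J] {l : Filter α}

/-- The finite sets `F a` form a Følner family along `l` for the injection `σ`: translating `F a`
by `σ` moves a proportion of its elements out of `F a` that tends to `0`. As `#(σ F \ F)` and
`#(F \ σ F)` are equal, only the first is recorded. -/
def IsFoelnerFor (l : Filter α) (F : α → Finset I) (σ : I ↪ I) : Prop :=
  Tendsto (fun a => (((F a).map σ \ F a).card : ℝ) / (F a).card) l (𝓝 0)

lemma isFoelnerFor_range_succ :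
    IsFoelnerFor atTop (fun n => Finset.range (n + 1)) (addRightEmbedding 1) := by
  have hdiff (n : ℕ) : (Finset.range (n + 1)).map (addRightEmbedding 1) \ Finset.range (n + 1)
      = {n + 1} := by
    ext k
    simp only [Finset.mem_sdiff, Finset.mem_map, Finset.mem_range, addRightEmbedding_apply,
      Finset.mem_singleton]
    exact ⟨by omega, fun h => ⟨⟨n, by omega⟩, by omega⟩⟩
  simpa [IsFoelnerFor, hdiff] using tendsto_one_div_add_atTop_nhds_zero_nat (𝕜 := ℝ)

namespace IsFoelnerFor

lemma refl (F : α → Finset I) : IsFoelnerFor l F (Function.Embedding.refl I) := by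
  simpa [IsFoelnerFor] using tendsto_const_nhds

lemma comp_tendsto {β : Type*} {k : Filter β} {F : α → Finset I} {σ : I ↪ I} {u : β → α}
    (h : IsFoelnerFor l F σ) (hu : Tendsto u k l) : IsFoelnerFor k (fun b => F (u b)) σ :=
  Tendsto.comp h hu

lemma prodMap {F : α → Finset I} {E : α → Finset J} {σ : I ↪ I} {τ : J ↪ J}
    (hF : IsFoelnerFor l F σ) (hE : IsFoelnerFor l E τ) :
    IsFoelnerFor l (fun a => F a ×ˢ E a) (σ.prodMap τ) := by
  have hsub (a : α) : (F a ×ˢ E a).map (σ.prodMap τ) \ F a ×ˢ E a ⊆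
      ((F a).map σ \ F a) ×ˢ (E a).map τ ∪ (F a).map σ ×ˢ ((E a).map τ \ E a) := by
    rw [Finset.prodMap_map_product]
    intro p
    simp only [Finset.mem_sdiff, Finset.mem_product, Finset.mem_union]
    tauto
  have hcard (a : α) : (((F a ×ˢ E a).map (σ.prodMap τ) \ F a ×ˢ E a).card : ℝ) ≤
      ((F a).map σ \ F a).card * (E a).card + (F a).card * ((E a).map τ \ E a).card := by
    exact_mod_cast (Finset.card_le_card (hsub a)).trans ((Finset.card_union_le _ _).trans_eq
      (by simp only [Finset.card_product, Finset.card_map]))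
  refine squeeze_zero (fun a => by positivity) (fun a => ?_)
    (by simpa using Tendsto.add hF hE)
  have hFa : (((F a).map σ \ F a).card : ℝ) / (F a).card * (F a).card =
      ((F a).map σ \ F a).card := div_mul_cancel_of_imp (by simp +contextual)
  have hEa : (((E a).map τ \ E a).card : ℝ) / (E a).card * (E a).card =
      ((E a).map τ \ E a).card := div_mul_cancel_of_imp (by simp +contextual)
  rw [Finset.card_product, Nat.cast_mul]
  refine div_le_of_le_mul₀ (by positivity) (by positivity) ((hcard a).trans_eq ?_)
  linear_combination -(E a).card * hFa - (F a).card * hEa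

end IsFoelnerFor

lemma abs_sum_map_sub_sum_le {s : Finset I} (σ : I ↪ I) {h : I → ℝ} {C : ℝ}
    (hC : ∀ i, |h i| ≤ C) :
    |∑ i ∈ s, h (σ i) - ∑ i ∈ s, h i| ≤ 2 * C * (s.map σ \ s).card := by
  have hsum (t : Finset I) : |∑ i ∈ t, h i| ≤ t.card * C :=
    (Finset.abs_sum_le_sum_abs _ _).trans ((Finset.sum_le_card_nsmul _ _ _ fun i _ => hC i).trans_eq
      (nsmul_eq_mul _ _))
  calc |∑ i ∈ s, h (σ i) - ∑ i ∈ s, h i|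
      = |∑ i ∈ s.map σ \ s, h i - ∑ i ∈ s \ s.map σ, h i| := by
        rw [Finset.sum_sdiff_sub_sum_sdiff, Finset.sum_map]
    _ ≤ (s.map σ \ s).card * C + (s \ s.map σ).card * C :=
        (abs_sub _ _).trans (add_le_add (hsum _) (hsum _))
    _ = 2 * C * (s.map σ \ s).card := by
        rw [Finset.card_sdiff_comm (Finset.card_map σ).symm]
        ring

lemma IsFoelnerFor.tendsto_expect_sub {F : α → Finset I} {σ : I ↪ I} (hF : IsFoelnerFor l F σ)
    {h : α → I → ℝ} {C : ℝ} (hC : ∀ a i, |h a i| ≤ C) :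
    Tendsto (fun a => (𝔼 i ∈ F a, h a (σ i)) - 𝔼 i ∈ F a, h a i) l (𝓝 0) := by
  refine squeeze_zero_norm (fun a => ?_) (by simpa using hF.const_mul (2 * C))
  rw [Finset.expect_eq_sum_div_card, Finset.expect_eq_sum_div_card, ← sub_div, Real.norm_eq_abs,
    abs_div, Nat.abs_cast, ← mul_div_assoc]
  gcongr
  exact abs_sum_map_sub_sum_le σ (hC a)

end Foelner

section EmpiricalMeasure

open scoped BigOperators

variable {I Y : Type*} [MeasurableSpace Y]

/-- The empirical measure of the points `φ i`, `i ∈ F`: the uniform average of their Dirac masses.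
It is a probability measure as soon as `F` is nonempty. -/
noncomputable def empiricalMeasure (F : Finset I) (φ : I → Y) : Measure Y :=
  (F.card : ENNReal)⁻¹ • ∑ i ∈ F, Measure.dirac (φ i)

lemma isProbabilityMeasure_empiricalMeasure {F : Finset I} (hF : F.Nonempty) (φ : I → Y) :
    IsProbabilityMeasure (empiricalMeasure F φ) := by
  constructor
  simpa [empiricalMeasure, Measure.finsetSum_apply] using
    ENNReal.inv_mul_cancel (by simpa using hF.ne_empty) (by finiteness)

lemma empiricalMeasure_apply_eq_zero {F : Finset I} {φ : I → Y} {A : Set Y}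
    (hA : MeasurableSet A) (hφ : ∀ i ∈ F, φ i ∉ A) : empiricalMeasure F φ A = 0 := by
  simp +contextual [empiricalMeasure, Measure.finsetSum_apply, Measure.dirac_apply' _ hA, hφ]

lemma integral_empiricalMeasure [MeasurableSingletonClass Y] (F : Finset I) (φ : I → Y)
    (G : Y → ℝ) : ∫ y, G y ∂empiricalMeasure F φ = 𝔼 i ∈ F, G (φ i) := by
  rw [empiricalMeasure, integral_smul_measure,
    integral_finsetSum_measure fun i _ => integrable_dirac (by simp), Finset.expect_eq_sum_div_card]
  simp [div_eq_inv_mul]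

end EmpiricalMeasure

section UniqueErgodicity

open scoped BigOperators

variable {Y : Type*} [MeasurableSpace Y]

/-- The group of bimeasurable permutations of `Y` preserving `ν`. -/
def measurePreservingPerm (ν : Measure Y) : Subgroup (Equiv.Perm Y) where
  carrier := {g | MeasurePreserving g ν ν ∧ MeasurePreserving g.symm ν ν}
  one_mem' := ⟨.id ν, .id ν⟩
  mul_mem' hg hh := ⟨hg.1.comp hh.1, hh.2.comp hg.2⟩
  inv_mem' hg := ⟨hg.2, hg.1⟩

lemma mem_measurePreservingPerm {ν : Measure Y} {g : Equiv.Perm Y}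
    (hg : MeasurePreserving g ν ν) (hsymm : Measurable g.symm) : g ∈ measurePreservingPerm ν :=
  ⟨hg, MeasurePreserving.symm ⟨g, hg.measurable, hsymm⟩ hg⟩

variable {α : Type*} {l : Filter α} [TopologicalSpace Y]

/-- The measures `ν a` are asymptotically invariant under `g` along `l`: every bounded continuous
observable has asymptotically the same mean as its composition with `g`. -/
def IsAsymptoticallyInvariant (l : Filter α) (ν : α → ProbabilityMeasure Y) (g : Y → Y) : Prop :=
  ∀ G : BoundedContinuousFunction Y ℝ,
    Tendsto (fun a => ∫ y, G (g y) ∂(ν a : Measure Y) - ∫ y, G y ∂(ν a : Measure Y)) l (𝓝 0)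

variable {ν : α → ProbabilityMeasure Y} {ρ m : ProbabilityMeasure Y} [HasOuterApproxClosed Y]

lemma measure_eq_zero_of_mapClusterPt [OpensMeasurableSpace Y] {O : Set Y} (hO : IsOpen O)
    (hν : ∀ a, (ν a : Measure Y) O = 0) (hρ : MapClusterPt ρ l ν) : (ρ : Measure Y) O = 0 := by
  obtain ⟨U, -, hU⟩ := mapClusterPt_iff_ultrafilter.1 hρ
  simpa [hν] using ProbabilityMeasure.le_liminf_measure_open_of_tendsto hU hO

variable [BorelSpace Y]

lemma IsAsymptoticallyInvariant.measurePreserving_of_mapClusterPt {g : Y → Y}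
    (hinv : IsAsymptoticallyInvariant l ν g) (hg : Continuous g) (hρ : MapClusterPt ρ l ν) :
    MeasurePreserving g (ρ : Measure Y) ρ := by
  obtain ⟨U, hUl, hU⟩ := mapClusterPt_iff_ultrafilter.1 hρ
  have hlim := ProbabilityMeasure.tendsto_iff_forall_integral_tendsto.1 hU
  have := Measure.isProbabilityMeasure_map (μ := (ρ : Measure Y)) hg.measurable.aemeasurable
  refine ⟨hg.measurable, ext_of_forall_integral_eq_of_IsFiniteMeasure fun G => ?_⟩
  rw [integral_map hg.measurable.aemeasurable G.continuous.aestronglyMeasurable]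
  exact sub_eq_zero.1 (tendsto_nhds_unique
    ((hlim (G.compContinuous ⟨g, hg⟩)).sub (hlim G)) ((hinv G).mono_left hUl))

variable [T2Space Y] [CompactSpace Y] {K : Set Y} {Γ : Set (Equiv.Perm Y)}

theorem tendsto_of_unique_invariant (hK : IsClosed K)
    (hΓ : ∀ g ∈ Γ, Continuous g ∧ Continuous g.symm)
    (huniq : ∀ ρ : Measure Y, IsProbabilityMeasure ρ → ρ Kᶜ = 0 →
      (∀ g ∈ Subgroup.closure Γ, MeasurePreserving g ρ ρ) → ρ = m)
    (hνK : ∀ a, (ν a : Measure Y) Kᶜ = 0)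
    (hinv : ∀ g ∈ Γ, IsAsymptoticallyInvariant l ν g) :
    Tendsto ν l (𝓝 m) := by
  refine tendsto_nhds_of_unique_mapClusterPt fun ρ hρ => ?_
  have hΓρ : Subgroup.closure Γ ≤ measurePreservingPerm (ρ : Measure Y) :=
    (Subgroup.closure_le _).2 fun g hg => mem_measurePreservingPerm
      ((hinv g hg).measurePreserving_of_mapClusterPt (hΓ g hg).1 hρ) (hΓ g hg).2.measurable
  exact Subtype.ext (huniq ρ inferInstance
    (measure_eq_zero_of_mapClusterPt hK.isOpen_compl hνK hρ) fun g hg => (hΓρ hg).1)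

theorem tendsto_expect_of_unique_invariant {I : Type*} [DecidableEq I] (hK : IsClosed K)
    (hΓ : ∀ g ∈ Γ, Continuous g ∧ Continuous g.symm)
    (huniq : ∀ ρ : Measure Y, IsProbabilityMeasure ρ → ρ Kᶜ = 0 →
      (∀ g ∈ Subgroup.closure Γ, MeasurePreserving g ρ ρ) → ρ = m)
    {F : α → Finset I} (hF : ∀ a, (F a).Nonempty) {φ : α → I → Y} (hφK : ∀ a i, φ a i ∈ K)
    (hφ : ∀ g ∈ Γ, ∃ σ, IsFoelnerFor l F σ ∧ ∀ a, Function.Semiconj (φ a) σ g)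
    {G : Y → ℝ} (hG : Continuous G) :
    Tendsto (fun a => 𝔼 i ∈ F a, G (φ a i)) l (𝓝 (∫ y, G y ∂(m : Measure Y))) := by
  let ν (a : α) : ProbabilityMeasure Y :=
    ⟨empiricalMeasure (F a) (φ a), isProbabilityMeasure_empiricalMeasure (hF a) (φ a)⟩
  have hνK (a : α) : (ν a : Measure Y) Kᶜ = 0 :=
    empiricalMeasure_apply_eq_zero hK.measurableSet.compl fun i _ => not_not.2 (hφK a i)
  have hinv (g : Equiv.Perm Y) (hg : g ∈ Γ) : IsAsymptoticallyInvariant l ν g := by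
    obtain ⟨σ, hσ, hφσ⟩ := hφ g hg
    intro H
    refine (hσ.tendsto_expect_sub (h := fun a i => H (φ a i))
      fun a i => H.norm_coe_le_norm (φ a i)).congr fun a => ?_
    simp only [ν, ProbabilityMeasure.coe_mk, integral_empiricalMeasure, (hφσ a).eq]
  have hν := ProbabilityMeasure.tendsto_iff_forall_integral_tendsto.1
    (tendsto_of_unique_invariant hK hΓ huniq hνK hinv)
    (BoundedContinuousFunction.mkOfCompact ⟨G, hG⟩)
  exact hν.congr fun a => integral_empiricalMeasure _ _ _

end UniqueErgodicity

section Cube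

variable {X : Type*}

lemma GST_eq_closure (S T : Equiv.Perm X) :
    GST S T = Subgroup.closure {sideS S, sideT T, diag4 S, diag4 T} := by
  let diag : Equiv.Perm X →* Equiv.Perm (X × X × X × X) :=
    { toFun := diag4, map_one' := rfl, map_mul' := fun _ _ => rfl }
  apply le_antisymm
  · have hdiag : Subgroup.closure {S, T} ≤
        (Subgroup.closure {sideS S, sideT T, diag4 S, diag4 T}).comap diag := by
      rw [Subgroup.closure_le]
      rintro g (rfl | rfl)
      · exact Subgroup.subset_closure (.inr (.inr (.inl rfl)))
      · exact Subgroup.subset_closure (.inr (.inr (.inr rfl)))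
    rw [GST, Subgroup.closure_le]
    rintro _ ((rfl | rfl) | ⟨g, hg, rfl⟩)
    · exact Subgroup.subset_closure (by simp)
    · exact Subgroup.subset_closure (by simp)
    · exact hdiag hg
  · refine Subgroup.closure_mono ?_
    rintro _ (rfl | rfl | rfl | rfl)
    · exact .inl (.inl rfl)
    · exact .inl (.inr rfl)
    · exact .inr ⟨S, Subgroup.subset_closure (by simp), rfl⟩
    · exact .inr ⟨T, Subgroup.subset_closure (by simp), rfl⟩

/-- The cube in the `(S, T)`-orbit of `x` with opposite vertices `S^i T^j x` and `S^a T^b x`. The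
exponents are absolute, so that the skewed averages have `a = i + k` and `b = j + p`. -/
def cubePoint (S T : Equiv.Perm X) (x : X) (i j a b : ℤ) : X × X × X × X :=
  ((S ^ i) ((T ^ j) x), (S ^ a) ((T ^ j) x), (S ^ i) ((T ^ b) x), (S ^ a) ((T ^ b) x))

section Perm

variable {S T : Equiv.Perm X} (x : X) (i j a b : ℤ)

lemma sideS_cubePoint : sideS S (cubePoint S T x i j a b) = cubePoint S T x i j (a + 1) b := by
  simp [cubePoint, sideS, add_comm a, zpow_one_add]

lemma diag4_cubePoint_left :
    diag4 S (cubePoint S T x i j a b) = cubePoint S T x (i + 1) j (a + 1) b := by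
  simp [cubePoint, diag4, add_comm _ (1 : ℤ), zpow_one_add]

lemma apply_zpow_zpow_of_commute (h : Commute S T) (m n : ℤ) :
    T ((S ^ m) ((T ^ n) x)) = (S ^ m) ((T ^ (n + 1)) x) := by
  rw [add_comm, zpow_one_add, ← Equiv.Perm.mul_apply, ← (h.zpow_left m).eq]
  rfl

lemma sideT_cubePoint (h : Commute S T) :
    sideT T (cubePoint S T x i j a b) = cubePoint S T x i j a (b + 1) := by
  simp [cubePoint, sideT, apply_zpow_zpow_of_commute x h]

lemma diag4_cubePoint_right (h : Commute S T) :
    diag4 T (cubePoint S T x i j a b) = cubePoint S T x i (j + 1) a (b + 1) := by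
  simp [cubePoint, diag4, apply_zpow_zpow_of_commute x h]

end Perm

section Homeomorph

variable [TopologicalSpace X] (S T : X ≃ₜ X)

lemma continuous_sideS : Continuous (sideS S.toEquiv) :=
  continuous_id.prodMap (S.continuous.prodMap (continuous_id.prodMap S.continuous))

lemma continuous_sideT : Continuous (sideT T.toEquiv) :=
  continuous_id.prodMap (continuous_id.prodMap (T.continuous.prodMap T.continuous))

lemma continuous_diag4 : Continuous (diag4 S.toEquiv) :=
  S.continuous.prodMap (S.continuous.prodMap (S.continuous.prodMap S.continuous))

lemma cubePoint_mem_cubeQ {S T : X ≃ₜ X} (h : Commute (S.toEquiv : Equiv.Perm X) T.toEquiv)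
    (x : X) (i j a b : ℤ) : cubePoint S.toEquiv T.toEquiv x i j a b ∈ cubeQ S T := by
  refine subset_closure ⟨(S.toEquiv ^ i : Equiv.Perm X) ((T.toEquiv ^ j : Equiv.Perm X) x),
    a - i, b - j, ?_⟩
  have hzpow (R : Equiv.Perm X) (m n : ℤ) (y : X) : (R ^ m) y = (R ^ (m - n)) ((R ^ n) y) := by
    rw [← Equiv.Perm.mul_apply, ← zpow_add, sub_add_cancel]
  have hcomm (m n : ℤ) (y : X) :
      (T.toEquiv ^ n : Equiv.Perm X) ((S.toEquiv ^ m : Equiv.Perm X) y) =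
        (S.toEquiv ^ m : Equiv.Perm X) ((T.toEquiv ^ n : Equiv.Perm X) y) :=
    (DFunLike.congr_fun (h.zpow_zpow m n).eq y).symm
  rw [cubePoint, hcomm, ← hzpow, ← hzpow, ← hzpow]

end Homeomorph

end Cube

section SkewAverage

open scoped BigOperators

lemma sum_Icc_neg_eq_sum_range {M : Type*} [AddCommMonoid M] (N i : ℕ) (g : ℤ → M) :
    ∑ k ∈ Finset.Icc (-(i : ℤ)) ((N : ℤ) - 1 - i), g (i + k) = ∑ a ∈ Finset.range N, g a := by
  refine Finset.sum_nbij' (fun k => (i + k).toNat) (fun a => (a : ℤ) - i)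
    (by grind) (by grind) (by grind) (by grind) fun k hk => ?_
  rw [Int.toNat_of_nonneg (by grind)]

/-- The box `[0, N]⁴`; its side is `N + 1`, so that it is never empty. -/
def box (N : ℕ) : Finset (ℕ × ℕ × ℕ × ℕ) :=
  Finset.range (N + 1) ×ˢ Finset.range (N + 1) ×ˢ Finset.range (N + 1) ×ˢ Finset.range (N + 1)

lemma box_nonempty (N : ℕ) : (box N).Nonempty := by simp [box]

lemma skewAverage_eq_expect_box (c : ℤ → ℤ → ℤ → ℤ → ℝ) (N : ℕ) :
    (((N + 1 : ℕ) : ℝ) ^ 4)⁻¹ * ∑ i ∈ Finset.range (N + 1), ∑ j ∈ Finset.range (N + 1),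
        ∑ k ∈ Finset.Icc (-(i : ℤ)) (((N + 1 : ℕ) : ℤ) - 1 - i),
          ∑ p ∈ Finset.Icc (-(j : ℤ)) (((N + 1 : ℕ) : ℤ) - 1 - j), c i j (i + k) (j + p) =
      𝔼 n ∈ box N, c n.1 n.2.1 n.2.2.1 n.2.2.2 := by
  simp only [fun i j : ℕ => fun a : ℤ => sum_Icc_neg_eq_sum_range (N + 1) j (c i j a),
    fun i j : ℕ => sum_Icc_neg_eq_sum_range (N + 1) i
      fun a => ∑ b ∈ Finset.range (N + 1), c i j a b]
  rw [Finset.expect_eq_sum_div_card, box, div_eq_inv_mul]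
  simp only [Finset.sum_product, Finset.card_product, Finset.card_range]
  congr 2
  push_cast
  ring

variable {X : Type*} {S T : Equiv.Perm X}

lemma exists_isFoelnerFor_box_semiconj_cubePoint (h : Commute S T) :
    ∀ g ∈ ({sideS S, sideT T, diag4 S, diag4 T} : Set (Equiv.Perm (X × X × X × X))),
      ∃ σ, IsFoelnerFor atTop box σ ∧ ∀ x, Function.Semiconj
        (fun n : ℕ × ℕ × ℕ × ℕ => cubePoint S T x n.1 n.2.1 n.2.2.1 n.2.2.2) σ g := by
  have hs := isFoelnerFor_range_succ
  have hr : IsFoelnerFor atTop (fun n => Finset.range (n + 1)) (.refl ℕ) := .refl _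
  rintro _ (rfl | rfl | rfl | rfl)
  · exact ⟨_, hr.prodMap (hr.prodMap (hs.prodMap hr)), fun x n => by simp [sideS_cubePoint]⟩
  · exact ⟨_, hr.prodMap (hr.prodMap (hr.prodMap hs)), fun x n => by simp [sideT_cubePoint, h]⟩
  · exact ⟨_, hs.prodMap (hr.prodMap (hs.prodMap hr)), fun x n => by simp [diag4_cubePoint_left]⟩
  · exact ⟨_, hr.prodMap (hs.prodMap (hr.prodMap hs)),
      fun x n => by simp [diag4_cubePoint_right, h]⟩

theorem tendstoUniformly_expect_box_cubePoint
    {X : Type*} [TopologicalSpace X] [CompactSpace X] [TopologicalSpace.MetrizableSpace X]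
    [MeasurableSpace X] [BorelSpace X] {S T : X ≃ₜ X}
    (hST : Commute (S.toEquiv : Equiv.Perm X) T.toEquiv)
    {m : ProbabilityMeasure (X × X × X × X)}
    (huniq : ∀ ρ : Measure (X × X × X × X), IsProbabilityMeasure ρ → ρ (cubeQ S T)ᶜ = 0 →
      (∀ g ∈ GST S.toEquiv T.toEquiv, MeasurePreserving g ρ ρ) → ρ = m)
    {F : X × X × X × X → ℝ} (hF : Continuous F) :
    TendstoUniformly (fun N x => 𝔼 n ∈ box N,
        F (cubePoint S.toEquiv T.toEquiv x n.1 n.2.1 n.2.2.1 n.2.2.2))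
      (fun _ => ∫ q, F q ∂(m : Measure (X × X × X × X))) atTop := by
  have hcont : ∀ g ∈ ({sideS S.toEquiv, sideT T.toEquiv, diag4 S.toEquiv, diag4 T.toEquiv} :
      Set (Equiv.Perm (X × X × X × X))), Continuous g ∧ Continuous g.symm := by
    rintro _ (rfl | rfl | rfl | rfl)
    exacts [⟨continuous_sideS S, continuous_sideS S.symm⟩,
      ⟨continuous_sideT T, continuous_sideT T.symm⟩,
      ⟨continuous_diag4 S, continuous_diag4 S.symm⟩, ⟨continuous_diag4 T, continuous_diag4 T.symm⟩]
  -- Letting the base point vary along `⊤` makes the convergence uniform in it.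
  have hlim := tendsto_expect_of_unique_invariant (m := m)
    (l := (atTop : Filter ℕ) ×ˢ (⊤ : Filter X)) (F := fun a => box a.1) isClosed_closure hcont
    (GST_eq_closure S.toEquiv T.toEquiv ▸ huniq)
    (fun a => box_nonempty a.1) (fun a n => cubePoint_mem_cubeQ hST a.2 _ _ _ _)
    (fun g hg =>
      let ⟨σ, hσ, hσg⟩ := exists_isFoelnerFor_box_semiconj_cubePoint hST g hg
      ⟨σ, hσ.comp_tendsto tendsto_fst, fun a => hσg a.2⟩) hF
  exact tendsto_prod_top_iff.1 hlim

theorem everywhere_convergence_skew_average_general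
    {X : Type*} [TopologicalSpace X] [CompactSpace X] [TopologicalSpace.MetrizableSpace X]
    [MeasurableSpace X] [BorelSpace X]
    (S T : X ≃ₜ X) (hcomm : ∀ x, S (T x) = T (S x))
    (μST : Measure (X × X × X × X)) [IsProbabilityMeasure μST]
    (hSTuniq : ∀ ν : Measure (X × X × X × X), IsProbabilityMeasure ν →
      ν (cubeQ S T)ᶜ = 0 →
      (∀ g ∈ GST S.toEquiv T.toEquiv, ∀ s : Set (X × X × X × X),
        MeasurableSet s → ν (⇑g ⁻¹' s) = ν s) →
      ν = μST)
    {F : X × X × X × X → ℝ} (hF : Continuous F) :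
    TendstoUniformly (fun (N : ℕ) (x : X) =>
      ((N : ℝ) ^ 4)⁻¹ * ∑ i ∈ Finset.range N, ∑ j ∈ Finset.range N,
        ∑ k ∈ Finset.Icc (-(i : ℤ)) ((N : ℤ) - 1 - i),
          ∑ p ∈ Finset.Icc (-(j : ℤ)) ((N : ℤ) - 1 - j),
            F (cubePoint S.toEquiv T.toEquiv x i j (i + k) (j + p)))
      (fun _ => ∫ q, F q ∂μST) atTop := by
  have hunif := tendstoUniformly_expect_box_cubePoint (Equiv.ext hcomm) (m := ⟨μST, inferInstance⟩)
    (fun ρ hρ hQ hinv => hSTuniq ρ hρ hQ fun g hg s hs =>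
      (hinv g hg).measure_preimage hs.nullMeasurableSet) hF
  intro u hu
  rw [← map_add_atTop_eq_nat 1, eventually_map]
  filter_upwards [hunif u hu] with N hN x
  exact Set.mem_of_eq_of_mem (congrArg (Prod.mk _) (skewAverage_eq_expect_box
    (fun i j a b => F (cubePoint S.toEquiv T.toEquiv x i j a b)) N)) (hN x)

end SkewAverage

/-- if `(X,S,T)` is strictly ergodic with unique invariant measure `μ` and the
cube system `(Q_{S,T}(X), G_{S,T})` is uniquely ergodic with unique invariant measure
`μ_{S,T}`, then the skewed four-fold averages converge everywhere to
`∫ f0 ⊗ f1 ⊗ f2 ⊗ f3 dμ_{S,T}`. -/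
theorem everywhere_convergence_skew_average
    {X : Type*} [MetricSpace X] [CompactSpace X] [MeasurableSpace X] [BorelSpace X]
    (S T : X ≃ₜ X) (hcomm : ∀ x, S (T x) = T (S x))
    (μ : Measure X) [IsProbabilityMeasure μ]
    -- (X,S,T) is strictly ergodic with unique invariant measure μ
    (hmin : ∀ x y : X, y ∈ closure {z | ∃ i j : ℤ, z = (S.toEquiv ^ i) ((T.toEquiv ^ j) x)})
    (hSinv : MeasurePreserving ⇑S μ μ) (hTinv : MeasurePreserving ⇑T μ μ)
    (huniq : ∀ ν : Measure X, IsProbabilityMeasure ν → MeasurePreserving ⇑S ν ν →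
      MeasurePreserving ⇑T ν ν → ν = μ)
    -- μ_{S,T} is the Host measure built from μ
    (μS : Measure (X × X)) (hμS : IsRelIndJoining μ ⇑S μS)
    (μST : Measure (X × X × X × X)) (hμST : IsHostJoining μS ⇑T μST)
    -- the cube system is uniquely ergodic with unique invariant measure μ_{S,T}
    (hSTprob : IsProbabilityMeasure μST) (hSTsupp : μST (cubeQ S T)ᶜ = 0)
    (hSTinv : ∀ g ∈ GST S.toEquiv T.toEquiv, ∀ s : Set (X × X × X × X),
      MeasurableSet s → μST (⇑g ⁻¹' s) = μST s)
    (hSTuniq : ∀ ν : Measure (X × X × X × X), IsProbabilityMeasure ν →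
      ν (cubeQ S T)ᶜ = 0 →
      (∀ g ∈ GST S.toEquiv T.toEquiv, ∀ s : Set (X × X × X × X),
        MeasurableSet s → ν (⇑g ⁻¹' s) = ν s) →
      ν = μST)
    (f0 f1 f2 f3 : X → ℝ) (hf0 : Continuous f0) (hf1 : Continuous f1)
    (hf2 : Continuous f2) (hf3 : Continuous f3) :
    ∀ x : X, Tendsto (fun N : ℕ =>
      ((N : ℝ) ^ 4)⁻¹ * ∑ i ∈ Finset.range N, ∑ j ∈ Finset.range N,
        ∑ k ∈ Finset.Icc (-(i : ℤ)) ((N : ℤ) - 1 - i),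
          ∑ p ∈ Finset.Icc (-(j : ℤ)) ((N : ℤ) - 1 - j),
            f0 ((S.toEquiv ^ (i : ℤ)) ((T.toEquiv ^ (j : ℤ)) x)) *
            f1 ((S.toEquiv ^ ((i : ℤ) + k)) ((T.toEquiv ^ (j : ℤ)) x)) *
            f2 ((S.toEquiv ^ (i : ℤ)) ((T.toEquiv ^ ((j : ℤ) + p)) x)) *
            f3 ((S.toEquiv ^ ((i : ℤ) + k)) ((T.toEquiv ^ ((j : ℤ) + p)) x)))
      atTop (nhds (∫ q, f0 q.1 * f1 q.2.1 * f2 q.2.2.1 * f3 q.2.2.2 ∂μST)) := by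
  exact fun x => (everywhere_convergence_skew_average_general S T hcomm μST hSTuniq
    (F := fun q => f0 q.1 * f1 q.2.1 * f2 q.2.2.1 * f3 q.2.2.2) (by fun_prop)).tendsto_at x
end
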